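/- arXiv:math/0311076 — 5 statements merged into one kernel-verified Lean document; each statement's English description precedes it below -/
import Mathlib

section
/- Let M be a Coxeter matrix on a countably infinite type S with M s t ≥ 3 or M s t = 0 (encoding ∞) for all s ≠ t, let (W, cs) be the associated Coxeter system, and fix an injective enumeration s : ℕ → S of the generators. Then for every k ∈ ℕ, the normalized moment N^{-k/2} · #{(i_1, …, i_k) ∈ {0, …, N-1}^k : cs.simple (s i_1) · … · cs.simple (s i_k) = 1 in W} converges, as N → ∞, to 0 if k is odd and to the Catalan number C_n = (1/(n+1))·binom(2n, n) if k = 2n is even. -/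
open Filter Topology

namespace CoxCLT

section rep
variable {S : Type*} (M : CoxeterMatrix S)

/-- The linear form `2 B(e_a, ·)` of the geometric representation. -/
noncomputable def form (a : S) : Module.Dual ℝ (S →₀ ℝ) :=
  Finsupp.linearCombination ℝ (fun t => -2 * Real.cos (Real.pi / M a t))

lemma form_single (a t : S) (c : ℝ) :
    form M a (Finsupp.single t c) = c * (-2 * Real.cos (Real.pi / M a t)) := by
  simp [form, Finsupp.linearCombination_single]

lemma form_self (a : S) : form M a (Finsupp.single a 1) = 2 := by
  simp [form_single]

/-- The simple reflection of the geometric representation. -/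
noncomputable def refl (a : S) : (S →₀ ℝ) ≃ₗ[ℝ] (S →₀ ℝ) :=
  Module.reflection (form_self M a)

lemma refl_apply (a : S) (v : S →₀ ℝ) :
    refl M a v = v - form M a v • Finsupp.single a 1 := Module.reflection_apply _ _

lemma refl_apply_same (a : S) (v : S →₀ ℝ) : refl M a v a = v a - form M a v := by
  simp [refl_apply]

lemma refl_apply_ne (a b : S) (h : b ≠ a) (v : S →₀ ℝ) : refl M a v b = v b := by
  simp [refl_apply, Finsupp.single_eq_of_ne h]

lemma liftable (hM : ∀ s t : S, s ≠ t → M s t = 0 ∨ 3 ≤ M s t) :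
    M.IsLiftable (refl M) := by
  intro a b
  by_cases hab : a = b
  · subst hab
    ext v
    simp [refl, Module.involutive_reflection _ _]
  rcases hM a b hab with h0 | h3
  · simp [h0]
  set m := M a b with hm
  have hmpos : (0 : ℝ) < m := by
    have : 0 < m := by omega
    exact_mod_cast this
  set θ : ℝ := 2 * Real.pi / m with hθ
  have hsin : Real.sin θ ≠ 0 := by
    apply ne_of_gt
    apply Real.sin_pos_of_pos_of_lt_pi
    · positivity
    · rw [hθ, div_lt_iff₀ hmpos]
      have : (3 : ℝ) ≤ m := by exact_mod_cast h3
      nlinarith [Real.pi_pos]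
  have ht : 2 * Real.cos θ = form M a (Finsupp.single b 1) * form M b (Finsupp.single a 1) - 2 := by
    rw [form_single, form_single, M.symmetric b a, ← hm, hθ, mul_div_assoc, Real.cos_two_mul]
    ring
  have hS : ∀ n : ℤ, (Polynomial.Chebyshev.S ℝ n).eval (2 * Real.cos θ)
      = Real.sin ((n + 1) * θ) / Real.sin θ := by
    intro n
    rw [eq_div_iff hsin, Polynomial.Chebyshev.S_two_mul_real_cos]
  have hmθ : m * θ = 2 * Real.pi := by
    rw [hθ]; field_simp
  apply LinearEquiv.ext
  intro z
  rw [refl, refl, Module.reflection_mul_reflection_pow_apply _ _ m z (2 * Real.cos θ) ht]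
  rcases Nat.even_or_odd' m with ⟨k, hk | hk⟩
  · have e1 : ((m : ℤ) - 2) / 2 = k - 1 := by omega
    have e2 : ((m : ℤ) - 1) / 2 = k - 1 := by omega
    have z1 : Real.sin (((k - 1 : ℤ) + 1 : ℝ) * θ) = 0 := by
      have : (((k - 1 : ℤ) + 1 : ℝ) * θ) = Real.pi := by
        have : (m : ℝ) = 2 * k := by exact_mod_cast hk
        rw [this] at hmθ
        push_cast
        linarith
      rw [this, Real.sin_pi]
    rw [e1, e2]
    simp only [hS, z1]
    simp
  · have e1 : ((m : ℤ) - 2) / 2 = k - 1 := by omega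
    have e2 : ((m : ℤ) - 1) / 2 = k := by omega
    have e3 : ((m : ℤ) - 3) / 2 = k - 1 := by omega
    have e4 : (m : ℤ) / 2 = k := by omega
    have z1 : Real.sin (((k : ℤ) + 1 : ℝ) * θ) / Real.sin θ +
        Real.sin (((k - 1 : ℤ) + 1 : ℝ) * θ) / Real.sin θ = 0 := by
      have : (((k : ℤ) + 1 : ℝ) * θ) = 2 * Real.pi - ((k - 1 : ℤ) + 1 : ℝ) * θ := by
        have : (m : ℝ) = 2 * k + 1 := by exact_mod_cast hk
        rw [this] at hmθ
        push_cast
        linarith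
      rw [this, Real.sin_two_pi_sub]
      ring
    rw [e1, e2, e3, e4]
    simp only [hS, z1]
    simp

lemma form_neg (hM : ∀ s t : S, s ≠ t → M s t = 0 ∨ 3 ≤ M s t) (a b : S) (hab : a ≠ b)
    (q : S →₀ ℝ) (hq : ∀ t, 0 ≤ q t) (hqa : q a = 0) (hqb : 0 < q b) : form M a q < 0 := by
  have hc : ∀ t, t ≠ a → 0 < Real.cos (Real.pi / M a t) := by
    intro t hta
    rcases hM a t (Ne.symm hta) with h | h
    · simp [h]
    · have h3 : (3 : ℝ) ≤ M a t := by exact_mod_cast h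
      apply Real.cos_pos_of_mem_Ioo
      constructor
      · have : 0 < Real.pi / M a t := by positivity
        linarith [Real.pi_pos]
      · rw [div_lt_iff₀ (by linarith)]
        nlinarith [Real.pi_pos]
  rw [form, Finsupp.linearCombination_apply, Finsupp.sum]
  apply Finset.sum_neg'
  · intro t _
    by_cases hta : t = a
    · subst hta; simp [hqa]
    · have := mul_nonneg (hq t) (hc t hta).le
      simp only [smul_eq_mul]; linarith
  · refine ⟨b, by simpa using hqb.ne', ?_⟩
    have := mul_pos hqb (hc b (Ne.symm hab))
    simp only [smul_eq_mul]; linarith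

end rep

section words
variable {S : Type*} {M : CoxeterMatrix S}
    {W : Type*} [Group W]

/-- The geometric representation. -/
noncomputable def rep (hM : ∀ s t : S, s ≠ t → M s t = 0 ∨ 3 ≤ M s t)
    (cs : CoxeterSystem M W) : W →* ((S →₀ ℝ) ≃ₗ[ℝ] (S →₀ ℝ)) := cs.lift ⟨refl M, liftable M hM⟩

lemma rep_simple (hM : ∀ s t : S, s ≠ t → M s t = 0 ∨ 3 ≤ M s t)
    (cs : CoxeterSystem M W) (a : S) : rep hM cs (cs.simple a) = refl M a :=
  cs.lift_apply_simple (liftable M hM) a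

lemma rep_cons (hM : ∀ s t : S, s ≠ t → M s t = 0 ∨ 3 ≤ M s t)
    (cs : CoxeterSystem M W) (a : S) (w : List S) (v : S →₀ ℝ) :
    rep hM cs (cs.wordProd (a :: w)) v = refl M a (rep hM cs (cs.wordProd w) v) := by
  rw [cs.wordProd_cons, map_mul, rep_simple]; rfl

lemma rep_coord (hM : ∀ s t : S, s ≠ t → M s t = 0 ∨ 3 ≤ M s t)
    (cs : CoxeterSystem M W) (a : S) (w : List S) (ha : a ∉ w) (v : S →₀ ℝ) :
    rep hM cs (cs.wordProd w) v a = v a := by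
  induction w with
  | nil => simp
  | cons b w ih =>
    simp only [List.mem_cons, not_or] at ha
    rw [rep_cons, refl_apply_ne _ _ _ ha.1, ih ha.2]

lemma rep_pos (hM : ∀ s t : S, s ≠ t → M s t = 0 ∨ 3 ≤ M s t)
    (cs : CoxeterSystem M W) (a : S) (u : List S) (hu : (a :: u).Nodup) (t : S) :
    0 ≤ rep hM cs (cs.wordProd u) (Finsupp.single a 1) t ∧
    (t ∈ u → 0 < rep hM cs (cs.wordProd u) (Finsupp.single a 1) t) := by
  classical
  induction u generalizing t with
  | nil => simp [Finsupp.single_apply]; split <;> simp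
  | cons b u ih =>
    have hu' : (a :: u).Nodup := by simp at hu ⊢; tauto
    have hab : a ≠ b := by simp at hu; tauto
    have hau : a ∉ u := by simp at hu; tauto
    have hbu : b ∉ u := by simp at hu; tauto
    rw [rep_cons]
    by_cases htb : t = b
    · subst htb
      have h0 : rep hM cs (cs.wordProd u) (Finsupp.single a 1) t = 0 := by
        rw [rep_coord _ _ _ _ hbu]; simp [hab]
      have h1 : rep hM cs (cs.wordProd u) (Finsupp.single a 1) a = 1 := by
        rw [rep_coord _ _ _ _ hau]; simp
      have h2 := form_neg M hM t a (Ne.symm hab) _ (fun t => (ih hu' t).1) h0 (by rw [h1]; simp)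
      rw [refl_apply_same, h0]
      constructor
      · linarith
      · intro _; linarith
    · rw [refl_apply_ne _ _ _ htb]
      refine ⟨(ih hu' t).1, fun h => (ih hu' t).2 ?_⟩
      simpa [htb] using h

lemma single_letter_ne (hM : ∀ s t : S, s ≠ t → M s t = 0 ∨ 3 ≤ M s t)
    (cs : CoxeterSystem M W) (a : S) (x y : List S) (hx : a ∉ x) (hy : a ∉ y) :
    cs.wordProd (x ++ a :: y) ≠ 1 := by
  intro h
  have h1 : cs.wordProd (a :: y) = cs.wordProd x.reverse := by
    rw [cs.wordProd_append] at h
    rw [cs.wordProd_reverse]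
    exact eq_inv_of_mul_eq_one_right h
  have h1' : cs.wordProd [a] = cs.wordProd (x.reverse ++ y.reverse) := by
    rw [cs.wordProd_cons] at h1
    rw [cs.wordProd_append, ← h1, cs.wordProd_reverse]
    simp
  have h2 := rep_coord hM cs a (x.reverse ++ y.reverse) (by simp [hx, hy]) (Finsupp.single a 1)
  rw [← h1', rep_cons, refl_apply_same] at h2
  simp [form_self] at h2

lemma gap_nil (hM : ∀ s t : S, s ≠ t → M s t = 0 ∨ 3 ≤ M s t)
    (cs : CoxeterSystem M W) (a : S) (x u y : List S) (hx : a ∉ x) (hy : a ∉ y) (hu : (a :: u).Nodup)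
    (h : cs.wordProd (x ++ a :: (u ++ a :: y)) = 1) : u = [] := by
  classical
  have h1 : cs.wordProd (a :: (u ++ [a])) = cs.wordProd (x.reverse ++ y.reverse) := by
    have e : x ++ a :: (u ++ a :: y) = x ++ (a :: (u ++ [a]) ++ y) := by simp
    rw [e, cs.wordProd_append, cs.wordProd_append] at h
    rw [cs.wordProd_append x.reverse, cs.wordProd_reverse, cs.wordProd_reverse]
    have := eq_inv_of_mul_eq_one_right h
    rw [← this]
    group
  have h2 := rep_coord hM cs a (x.reverse ++ y.reverse) (by simp [hx, hy]) (Finsupp.single a 1)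
  have h3 : rep hM cs (cs.wordProd (u ++ [a])) (Finsupp.single a 1)
      = - rep hM cs (cs.wordProd u) (Finsupp.single a 1) := by
    rw [cs.wordProd_append, map_mul, LinearEquiv.mul_apply, cs.wordProd_singleton, rep_simple,
      refl_apply, form_self, ← map_neg]
    congr 1
    module
  rw [← h1, rep_cons, refl_apply_same, h3] at h2
  have hau : a ∉ u := by simp at hu; tauto
  have h4 := rep_coord hM cs a u hau (Finsupp.single a 1)
  have h5 := rep_pos hM cs a u hu
  generalize rep hM cs (cs.wordProd u) (Finsupp.single a 1) = q at *
  simp only [Finsupp.single_eq_same, Finsupp.neg_apply, map_neg, h4] at h2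
  by_contra hne
  obtain ⟨b, hb⟩ := List.exists_mem_of_ne_nil u hne
  have hba : b ≠ a := by rintro rfl; exact hau hb
  have h6 := form_neg M hM a b hba.symm (q - Finsupp.single a 1) (by
    intro t
    by_cases hta : t = a
    · subst hta; simp [h4]
    · simp only [Finsupp.sub_apply, Finsupp.single_eq_of_ne hta]
      simpa using (h5 t).1) (by simp [h4]) (by
      simp only [Finsupp.sub_apply, Finsupp.single_eq_of_ne hba]
      simpa using (h5 b).2 hb)
  rw [map_sub, form_self] at h6
  linarith

end words

/-- Words coming from non-crossing pairings. -/
inductive NC {α : Type*} : List α → Prop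
  | nil : NC []
  | node (a : α) (l r : List α) : NC l → NC r → NC (a :: (l ++ a :: r))

lemma NC.map {α β : Type*} (f : α → β) {w : List α} (h : NC w) : NC (w.map f) := by
  induction h with
  | nil => exact NC.nil
  | node a l r _ _ ih1 ih2 => simpa using NC.node (f a) _ _ ih1 ih2

lemma NC.insert {α : Type*} (a : α) {w : List α} (h : NC w) :
    ∀ x y, w = x ++ y → NC (x ++ a :: a :: y) := by
  induction h with
  | nil =>
    intro x y h
    have h' := h.symm
    simp only [List.append_eq_nil_iff] at h'
    obtain ⟨rfl, rfl⟩ := h'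
    exact NC.node a [] [] NC.nil NC.nil
  | node b l r hl hr ihl ihr =>
    intro x y h
    cases x with
    | nil =>
      simp only [List.nil_append] at h ⊢
      subst h
      exact NC.node a [] _ NC.nil (NC.node b l r hl hr)
    | cons c x =>
      simp only [List.cons_append, List.cons.injEq] at h
      obtain ⟨rfl, h⟩ := h
      rcases List.append_eq_append_iff.1 h with ⟨z, rfl, hz⟩ | ⟨z, rfl, hz⟩
      · cases z with
        | nil =>
          simp only [List.nil_append] at hz
          subst hz
          have := NC.node b _ r (ihl l [] (by simp)) hr
          simpa using this
        | cons d z =>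
          simp only [List.cons_append, List.cons.injEq] at hz
          obtain ⟨rfl, rfl⟩ := hz
          have := NC.node b l _ hl (ihr z y rfl)
          simpa using this
      · subst hz
        have := NC.node b _ r (ihl x z rfl) hr
        simpa using this

lemma NC.wordProd {S : Type*} {M : CoxeterMatrix S} {W : Type*} [Group W]
    (cs : CoxeterSystem M W) {w : List S} (h : NC w) : cs.wordProd w = 1 := by
  induction h with
  | nil => simp
  | node a l r _ _ h1 h2 => simp [cs.wordProd_cons, cs.wordProd_append, h1, h2]

lemma exists_gap {α : Type*} (w : List α) (h : ¬ w.Nodup) :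
    ∃ x a u y, w = x ++ a :: (u ++ a :: y) ∧ (a :: u).Nodup := by
  induction w with
  | nil => simp at h
  | cons b w ih =>
    by_cases hw : w.Nodup
    · have hb : b ∈ w := by
        by_contra hb; exact h (List.nodup_cons.2 ⟨hb, hw⟩)
      obtain ⟨u, y, rfl⟩ := List.append_of_mem hb
      refine ⟨[], b, u, y, rfl, ?_⟩
      rw [List.nodup_middle] at hw
      simp only [List.nodup_cons, List.mem_append, not_or, List.nodup_append] at hw ⊢
      tauto
    · obtain ⟨x, a, u, y, rfl, hu⟩ := ih hw
      exact ⟨b :: x, a, u, y, rfl, hu⟩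

section words2
variable {S : Type*} [DecidableEq S] {M : CoxeterMatrix S}
    {W : Type*} [Group W]

lemma two_le_count (hM : ∀ s t : S, s ≠ t → M s t = 0 ∨ 3 ≤ M s t)
    (cs : CoxeterSystem M W) (w : List S) (h : cs.wordProd w = 1) (a : S) (ha : a ∈ w) : 2 ≤ w.count a := by
  by_contra hlt
  have h1 : w.count a ≤ 1 := by omega
  obtain ⟨x, y, rfl⟩ := List.append_of_mem ha
  simp only [List.count_append, List.count_cons_self] at h1
  refine single_letter_ne hM cs a x y ?_ ?_ h
  · apply List.count_eq_zero.1; omega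
  · apply List.count_eq_zero.1; omega

lemma NC_of_count (hM : ∀ s t : S, s ≠ t → M s t = 0 ∨ 3 ≤ M s t)
    (cs : CoxeterSystem M W) : ∀ (n : ℕ) (w : List S), w.length = n → cs.wordProd w = 1 →
    (∀ a, w.count a ≤ 2) → NC w := by
  intro n
  induction n using Nat.strong_induction_on with
  | _ n ih =>
    intro w hn hw hc
    by_cases hnil : w = []
    · subst hnil; exact NC.nil
    have hnd : ¬ w.Nodup := by
      intro hnd
      obtain ⟨a, ha⟩ := List.exists_mem_of_ne_nil w hnil
      have := two_le_count hM cs w hw a ha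
      have := List.nodup_iff_count_le_one.1 hnd a
      omega
    obtain ⟨x, a, u, y, rfl, hu⟩ := exists_gap w hnd
    have hca := hc a
    simp only [List.count_append, List.count_cons_self] at hca
    have hx : a ∉ x := by apply List.count_eq_zero.1; omega
    have hy : a ∉ y := by apply List.count_eq_zero.1; omega
    have hu0 := gap_nil hM cs a x u y hx hy hu hw
    subst hu0
    simp only [List.nil_append] at *
    refine NC.insert a (ih (x ++ y).length ?_ (x ++ y) rfl ?_ ?_) x y rfl
    · rw [← hn]; simp
    · simpa [cs.wordProd_append, cs.wordProd_cons] using hw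
    · intro b
      have := hc b
      simp only [List.count_append, List.count_cons] at this ⊢
      omega

end words2

open BinaryTree in
/-- The word of a binary tree whose nodes are labelled by a list in preorder. -/
def wd {α : Type*} : BinaryTree Unit → List α → List α
  | .nil, _ => []
  | .node _ _ _, [] => []
  | .node _ l r, a :: ls => a :: (wd l (ls.take l.numNodes) ++ a :: wd r (ls.drop l.numNodes))

lemma wd_NC {α : Type*} (t : BinaryTree Unit) : ∀ ls : List α, NC (wd t ls) := by
  induction t with
  | nil => intro ls; simpa [wd] using NC.nil
  | node _ l r ihl ihr =>
    intro ls
    cases ls with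
    | nil => simpa [wd] using NC.nil
    | cons a ls => rw [wd]; exact NC.node a _ _ (ihl _) (ihr _)

lemma wd_length {α : Type*} (t : BinaryTree Unit) :
    ∀ ls : List α, ls.length = t.numNodes → (wd t ls).length = 2 * t.numNodes := by
  induction t with
  | nil => intro ls _; simp [wd, BinaryTree.numNodes]
  | node _ l r ihl ihr =>
    intro ls h
    cases ls with
    | nil => simp [BinaryTree.numNodes] at h
    | cons a ls =>
      simp only [BinaryTree.numNodes, List.length_cons] at h
      have h1 := ihl (ls.take l.numNodes) (by simp; omega)
      have h2 := ihr (ls.drop l.numNodes) (by simp; omega)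
      simp only [wd, List.length_cons, List.length_append, h1, h2, BinaryTree.numNodes]
      ring

lemma mem_of_mem_wd {α : Type*} (x : α) (t : BinaryTree Unit) :
    ∀ ls : List α, x ∈ wd t ls → x ∈ ls := by
  induction t with
  | nil => intro ls h; simp [wd] at h
  | node _ l r ihl ihr =>
    intro ls h
    cases ls with
    | nil => simp [wd] at h
    | cons a ls =>
      simp only [wd, List.mem_cons, List.mem_append] at h
      rcases h with h | h | h | h
      · simp [h]
      · exact List.mem_cons_of_mem _ (List.mem_of_mem_take (ihl _ h))
      · simp [h]
      · exact List.mem_cons_of_mem _ (List.mem_of_mem_drop (ihr _ h))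

lemma NC.exists_wd {α : Type*} {w : List α} (h : NC w) :
    ∃ (t : BinaryTree Unit) (ls : List α), ls.length = t.numNodes ∧ wd t ls = w := by
  induction h with
  | nil => exact ⟨.nil, [], rfl, rfl⟩
  | node a l r _ _ h1 h2 =>
    obtain ⟨t1, l1, e1, rfl⟩ := h1
    obtain ⟨t2, l2, e2, rfl⟩ := h2
    refine ⟨.node () t1 t2, a :: (l1 ++ l2), by simp [BinaryTree.numNodes, e1, e2], ?_⟩
    simp [wd, ← e1]

lemma split_unique {α : Type*} (a : α) : ∀ (x x' y y' : List α), a ∉ x → a ∉ x' →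
    x ++ a :: y = x' ++ a :: y' → x = x' ∧ y = y' := by
  intro x
  induction x with
  | nil =>
    intro x' y y' _ h2 h
    cases x' with
    | nil => simpa using h
    | cons b x' => simp at h h2; tauto
  | cons b x ih =>
    intro x' y y' h1 h2 h
    cases x' with
    | nil => simp at h h1; exact absurd h.1.symm h1.1
    | cons c x' =>
      simp only [List.mem_cons, not_or, List.cons_append, List.cons.injEq] at h h1 h2
      obtain ⟨e1, e2⟩ := ih x' y y' h1.2 h2.2 h.2
      exact ⟨by rw [h.1, e1], e2⟩

lemma wd_inj {α : Type*} (t : BinaryTree Unit) : ∀ (t' : BinaryTree Unit) (ls ls' : List α),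
    ls.length = t.numNodes → ls'.length = t'.numNodes → ls.Nodup → ls'.Nodup →
    wd t ls = wd t' ls' → t = t' ∧ ls = ls' := by
  induction t with
  | nil =>
    intro t' ls ls' h1 h2 _ _ h
    have hl : (wd t' ls').length = 0 := by rw [← h]; simp [wd]
    rw [wd_length t' ls' h2] at hl
    cases t' with
    | nil =>
      refine ⟨rfl, ?_⟩
      simp only [BinaryTree.numNodes, List.length_eq_zero_iff] at h1 h2
      rw [h1, h2]
    | node _ l r => simp [BinaryTree.numNodes] at hl
  | node _ l r ihl ihr =>
    intro t' ls ls' h1 h2 n1 n2 h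
    cases ls with
    | nil => simp [BinaryTree.numNodes] at h1
    | cons a ls =>
      cases t' with
      | nil => simp [wd] at h
      | node _ l' r' =>
        cases ls' with
        | nil => simp [BinaryTree.numNodes] at h2
        | cons a' ls' =>
          simp only [wd, List.cons.injEq] at h
          obtain ⟨rfl, h⟩ := h
          simp only [BinaryTree.numNodes, List.length_cons] at h1 h2
          rw [List.nodup_cons] at n1 n2
          obtain ⟨e1, e2⟩ := split_unique a _ _ _ _
            (fun hm => n1.1 (List.mem_of_mem_take (mem_of_mem_wd _ _ _ hm)))
            (fun hm => n2.1 (List.mem_of_mem_take (mem_of_mem_wd _ _ _ hm))) h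
          obtain ⟨rfl, f1⟩ := ihl l' _ _ (by simp; omega) (by simp; omega)
            (n1.2.sublist (List.take_sublist _ _)) (n2.2.sublist (List.take_sublist _ _)) e1
          obtain ⟨rfl, f2⟩ := ihr r' _ _ (by simp; omega) (by simp; omega)
            (n1.2.sublist (List.drop_sublist _ _)) (n2.2.sublist (List.drop_sublist _ _)) e2
          refine ⟨rfl, ?_⟩
          rw [← List.take_append_drop l.numNodes ls, f1, f2, List.take_append_drop]

/-- Words of non-crossing type. -/
def ncSet (k N : ℕ) : Set (List (Fin N)) := {w | w.length = k ∧ NC w}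

/-- Words with few distinct letters. -/
def fewSet (k N : ℕ) : Set (List (Fin N)) := {w | w.length = k ∧ 2 * w.dedup.length < k}

lemma finite_len (k N : ℕ) : {w : List (Fin N) | w.length = k}.Finite :=
  List.finite_length_eq (Fin N) k

lemma ncSet_odd (k N : ℕ) (hk : ¬ Even k) : ncSet k N = ∅ := by
  ext w
  simp only [ncSet, Set.mem_ofPred_eq, Set.mem_empty_iff_false, iff_false, not_and]
  intro hl h
  obtain ⟨t, ls, h1, rfl⟩ := h.exists_wd
  rw [wd_length t ls h1] at hl
  exact hk ⟨t.numNodes, by omega⟩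

lemma ncSet_upper (n N : ℕ) : (ncSet (2 * n) N).ncard ≤ catalan n * N ^ n := by
  classical
  let T := (BinaryTree.treesOfNumNodesEq n ×ˢ (Finset.univ : Finset (Fin n → Fin N)))
  have hT : T.card = catalan n * N ^ n := by
    simp [T, BinaryTree.treesOfNumNodesEq_card_eq_catalan]
  have hsub : ncSet (2 * n) N ⊆ ((T.image fun p => wd p.1 (List.ofFn p.2) : Finset _) : Set _) := by
    rintro w ⟨hl, h⟩
    obtain ⟨t, ls, h1, rfl⟩ := h.exists_wd
    rw [wd_length t ls h1] at hl
    have hn : t.numNodes = n := by omega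
    have hln : ls.length = n := by omega
    subst hln
    simp only [Finset.coe_image, Set.mem_image, Finset.mem_coe]
    refine ⟨(t, ls.get), ?_, ?_⟩
    · simp [T, BinaryTree.mem_treesOfNumNodesEq, hn]
    · simp
  calc (ncSet (2 * n) N).ncard ≤ _ := Set.ncard_le_ncard hsub (Finset.finite_toSet _)
    _ = _ := Set.ncard_coe_finset _
    _ ≤ T.card := Finset.card_image_le
    _ = _ := hT

lemma ncSet_lower (n N : ℕ) : catalan n * N.descFactorial n ≤ (ncSet (2 * n) N).ncard := by
  classical
  let T := (BinaryTree.treesOfNumNodesEq n ×ˢ (Finset.univ : Finset (Fin n ↪ Fin N)))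
  have hT : T.card = catalan n * N.descFactorial n := by
    simp [T, BinaryTree.treesOfNumNodesEq_card_eq_catalan, Fintype.card_embedding_eq]
  have hinj : Set.InjOn (fun p : BinaryTree Unit × (Fin n ↪ Fin N) => wd p.1 (List.ofFn p.2)) T := by
    rintro ⟨t, f⟩ h1 ⟨t', f'⟩ h2 h
    simp only [T, Finset.coe_product, Set.mem_prod, Finset.mem_coe,
      BinaryTree.mem_treesOfNumNodesEq] at h1 h2 h
    obtain ⟨rfl, e⟩ := wd_inj t t' _ _ (by simp [h1.1]) (by simp [h2.1])
      (List.nodup_ofFn.2 f.injective) (List.nodup_ofFn.2 f'.injective) h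
    have := List.ofFn_injective e
    rw [DFunLike.coe_injective this]
  rw [← hT, ← Finset.card_image_of_injOn hinj, ← Set.ncard_coe_finset]
  apply Set.ncard_le_ncard
  · intro w hw
    simp only [Finset.coe_image, Set.mem_image, Finset.mem_coe] at hw
    obtain ⟨⟨t, f⟩, h1, rfl⟩ := hw
    simp only [T, Finset.mem_product, BinaryTree.mem_treesOfNumNodesEq] at h1
    refine ⟨?_, wd_NC _ _⟩
    simp only
    rw [wd_length _ _ (by simp [h1.1]), h1.1]
  · exact (finite_len (2 * n) N).subset fun w hw => hw.1

lemma fewSet_upper (k N : ℕ) : (fewSet k N).ncard ≤ ((k - 1) / 2) ^ k * N ^ ((k - 1) / 2) := by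
  classical
  set d := (k - 1) / 2 with hd
  let T := (Finset.univ : Finset ((Fin k → Fin d) × (Fin d → Fin N)))
  have hT : T.card = d ^ k * N ^ d := by simp [T]
  have hsub : fewSet k N ⊆
      ((T.image fun p => List.ofFn (fun j => p.2 (p.1 j)) : Finset _) : Set _) := by
    rintro w ⟨hl, h⟩
    simp only [Finset.coe_image, Set.mem_image, Finset.mem_coe]
    have hk : 0 < w.length := by omega
    have hid : ∀ j : Fin k, w.dedup.idxOf (w.get (j.cast hl.symm)) < w.dedup.length := by
      intro j
      apply List.idxOf_lt_length_iff.2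
      exact List.mem_dedup.2 (List.get_mem _ _)
    refine ⟨(fun j => ⟨w.dedup.idxOf (w.get (j.cast hl.symm)), by have := hid j; omega⟩,
      fun j => w.dedup.getD j (w.get ⟨0, hk⟩)), Finset.mem_univ _, ?_⟩
    apply List.ext_getElem
    · simp [hl]
    · intro i h1 h2
      have := hid ⟨i, by omega⟩
      simp only [List.getElem_ofFn]
      rw [List.getD_eq_getElem _ _ this]
      simp
  calc (fewSet k N).ncard ≤ _ := Set.ncard_le_ncard hsub (Finset.finite_toSet _)
    _ = _ := Set.ncard_coe_finset _
    _ ≤ T.card := Finset.card_image_le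
    _ = _ := hT

lemma fewSet_upper' (k N : ℕ) :
    (fewSet k N).ncard ≤ (k * ((k - 1) / 2) ^ k) * N ^ ((k - 1) / 2) := by
  rcases Nat.eq_zero_or_pos k with rfl | hk
  · simp [fewSet]
  · refine (fewSet_upper k N).trans (Nat.mul_le_mul_right _ ?_)
    exact Nat.le_mul_of_pos_left _ hk

section main
variable {S : Type*} {M : CoxeterMatrix S} {W : Type*} [Group W]

/-- Words with trivial product. -/
def oneSet (cs : CoxeterSystem M W) (s : ℕ → S) (k N : ℕ) : Set (List (Fin N)) :=
  {w | w.length = k ∧ cs.wordProd (w.map fun x : Fin N => s (x : ℕ)) = 1}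

lemma oneSet_card (cs : CoxeterSystem M W) (s : ℕ → S) (k N : ℕ) :
    Nat.card {i : Fin k → Fin N // cs.wordProd (List.ofFn fun j => s ((i j : ℕ))) = 1}
      = (oneSet cs s k N).ncard := by
  have : oneSet cs s k N = (List.ofFn : (Fin k → Fin N) → List (Fin N)) ''
      {i | cs.wordProd (List.ofFn fun j => s ((i j : ℕ))) = 1} := by
    ext w
    simp only [oneSet, Set.mem_ofPred_eq, Set.mem_image]
    constructor
    · rintro ⟨rfl, h⟩
      refine ⟨w.get, ?_, by simp⟩
      rw [← h]
      congr 1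
      apply List.ext_getElem <;> simp
    · rintro ⟨i, h, rfl⟩
      refine ⟨by simp, ?_⟩
      rw [← h, List.map_ofFn]
      rfl
  rw [this, Set.ncard_image_of_injective _ List.ofFn_injective]
  rfl

lemma ncSet_subset (cs : CoxeterSystem M W) (s : ℕ → S) (k N : ℕ) :
    ncSet k N ⊆ oneSet cs s k N := fun _ hw => ⟨hw.1, (hw.2.map _).wordProd cs⟩

lemma oneSet_finite (cs : CoxeterSystem M W) (s : ℕ → S) (k N : ℕ) :
    (oneSet cs s k N).Finite := (finite_len k N).subset fun _ hw => hw.1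

lemma oneSet_subset (hM : ∀ s t : S, s ≠ t → M s t = 0 ∨ 3 ≤ M s t)
    (cs : CoxeterSystem M W) (s : ℕ → S) (hs : Function.Injective s) (k N : ℕ) :
    oneSet cs s k N ⊆ ncSet k N ∪ fewSet k N := by
  classical
  rintro w ⟨hl, h⟩
  set g : Fin N → S := fun x => s (x : ℕ) with hg
  have hgi : Function.Injective g := fun x y hxy => Fin.ext (hs hxy)
  have hcount : ∀ a, (w.map g).count (g a) = w.count a := fun a =>
    List.count_map_of_injective _ _ hgi _
  by_cases hc : ∀ a, w.count a ≤ 2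
  · left
    refine ⟨hl, ?_⟩
    by_cases hw : w = []
    · subst hw; exact NC.nil
    obtain ⟨a0, _⟩ := List.exists_mem_of_ne_nil w hw
    have : Nonempty (Fin N) := ⟨a0⟩
    have h1 : NC (w.map g) := by
      refine NC_of_count hM cs _ _ rfl h ?_
      intro a
      by_cases ha : a ∈ w.map g
      · obtain ⟨b, _, rfl⟩ := List.mem_map.1 ha
        rw [hcount]; exact hc b
      · rw [List.count_eq_zero.2 ha]; omega
    have h2 := h1.map (Function.invFun g)
    rw [List.map_map, Function.invFun_comp hgi, List.map_id] at h2
    exact h2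
  · right
    push Not at hc
    obtain ⟨a, ha⟩ := hc
    refine ⟨hl, ?_⟩
    rw [← hl, ← List.card_toFinset, ← List.sum_toFinset_count_eq_length, mul_comm, ← smul_eq_mul,
      ← Finset.sum_const]
    apply Finset.sum_lt_sum
    · intro b hb
      rw [← hcount]
      exact two_le_count hM cs _ h _ (List.mem_map_of_mem (List.mem_toFinset.1 hb))
    · exact ⟨a, List.mem_toFinset.2 (List.count_pos_iff.1 (by omega)), ha⟩

end main

lemma few_tendsto (C : ℝ) (k : ℕ) :
    Tendsto (fun N : ℕ => (k * C) * (N : ℝ) ^ ((k - 1) / 2) / Real.sqrt N ^ k) atTop (𝓝 0) := by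
  rcases Nat.eq_zero_or_pos k with rfl | hk
  · simp
  have h1 : Tendsto (fun N : ℕ => Real.sqrt N) atTop atTop :=
    Real.tendsto_sqrt_atTop.comp tendsto_natCast_atTop_atTop
  have h2 : Tendsto (fun x : ℝ => (k * C) * (x ^ (2 * ((k - 1) / 2)) / x ^ k)) atTop (𝓝 ((k * C) * 0)) :=
    (tendsto_pow_div_pow_atTop_zero (by omega)).const_mul (k * C)
  rw [mul_zero] at h2
  refine (h2.comp h1).congr fun N => ?_
  simp only [Function.comp]
  rw [pow_mul, Real.sq_sqrt (Nat.cast_nonneg N)]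
  ring

lemma desc_tendsto (n : ℕ) :
    Tendsto (fun N : ℕ => (N.descFactorial n : ℝ) / (N : ℝ) ^ n) atTop (𝓝 1) := by
  induction n with
  | zero => simp
  | succ n ih =>
    have h : Tendsto (fun N : ℕ => ((N - n : ℕ) : ℝ) / N) atTop (𝓝 1) := by
      have h0 : Tendsto (fun N : ℕ => 1 - (n : ℝ) / N) atTop (𝓝 (1 - 0)) :=
        tendsto_const_nhds.sub (tendsto_const_div_atTop_nhds_zero_nat (n : ℝ))
      rw [sub_zero] at h0
      refine h0.congr' ?_
      filter_upwards [eventually_ge_atTop (n + 1)] with N hN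
      rw [Nat.cast_sub (by omega)]
      have : (N : ℝ) ≠ 0 := by exact_mod_cast (by omega : N ≠ 0)
      field_simp
    have := h.mul ih
    rw [one_mul] at this
    refine this.congr fun N => ?_
    rw [Nat.descFactorial_succ, pow_succ]
    push_cast
    rw [div_mul_div_comm, mul_comm (N : ℝ)]

end CoxCLT

/-- **Central limit theorem for Coxeter systems of large type.**
Let `M` be a Coxeter matrix on a countably infinite type `S` with `M s t ≥ 3` or `M s t = 0`
(encoding `∞`) for all `s ≠ t`, let `(W, cs)` be the associated Coxeter system, and fix an
injective enumeration `s : ℕ → S` of the generators.  Then for every `k`, the normalized moment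
`N^(-k/2) · #{(i₁, …, i_k) ∈ {0,…,N-1}^k : s i₁ ⋯ s i_k = 1}` converges, as `N → ∞`, to `0` if
`k` is odd and to the Catalan number `C_n` if `k = 2n` is even. -/
theorem coxeter_clt {S : Type*} [Countable S] [Infinite S]
    (M : CoxeterMatrix S) (hM : ∀ s t : S, s ≠ t → M s t = 0 ∨ 3 ≤ M s t)
    {W : Type*} [Group W] (cs : CoxeterSystem M W)
    (s : ℕ → S) (hs : Function.Injective s) (k : ℕ) :
    Tendsto
      (fun N : ℕ =>
        (Nat.card {i : Fin k → Fin N //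
            cs.wordProd (List.ofFn fun j => s ((i j : ℕ))) = 1} : ℝ) / (Real.sqrt N) ^ k)
      atTop
      (𝓝 (if Even k then (catalan (k / 2) : ℝ) else 0)) := by
  have hlow : ∀ N, (CoxCLT.ncSet k N).ncard ≤ (CoxCLT.oneSet cs s k N).ncard := fun N =>
    Set.ncard_le_ncard (CoxCLT.ncSet_subset cs s k N) (CoxCLT.oneSet_finite cs s k N)
  have hup : ∀ N, (CoxCLT.oneSet cs s k N).ncard ≤
      (CoxCLT.ncSet k N).ncard + (k * ((k - 1) / 2) ^ k) * N ^ ((k - 1) / 2) := fun N =>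
    ((Set.ncard_le_ncard (CoxCLT.oneSet_subset hM cs s hs k N)
      (((CoxCLT.finite_len k N).subset fun _ hw => hw.1).union
        ((CoxCLT.finite_len k N).subset fun _ hw => hw.1))).trans (Set.ncard_union_le _ _)).trans
      (Nat.add_le_add_left (CoxCLT.fewSet_upper' k N) _)
  simp only [CoxCLT.oneSet_card]
  by_cases hk : Even k
  · rw [if_pos hk]
    obtain ⟨n, hn⟩ := hk
    have hkn : k = 2 * n := by omega
    have hk2 : k / 2 = n := by omega
    rw [hk2]
    have hsq : ∀ N : ℕ, Real.sqrt N ^ k = (N : ℝ) ^ n := by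
      intro N
      rw [hkn, pow_mul, Real.sq_sqrt (Nat.cast_nonneg N)]
    have hlo : Tendsto (fun N : ℕ => (catalan n : ℝ) * ((N.descFactorial n : ℝ) / (N : ℝ) ^ n))
        atTop (𝓝 (catalan n)) := by
      simpa using (CoxCLT.desc_tendsto n).const_mul (catalan n : ℝ)
    have hhi : Tendsto (fun N : ℕ => (catalan n : ℝ) +
        (k * (((k - 1) / 2 : ℕ) : ℝ) ^ k) * (N : ℝ) ^ ((k - 1) / 2) / Real.sqrt N ^ k)
        atTop (𝓝 (catalan n)) := by
      simpa using (CoxCLT.few_tendsto ((((k - 1) / 2 : ℕ) : ℝ) ^ k) k).const_add (catalan n : ℝ)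
    refine tendsto_of_tendsto_of_tendsto_of_le_of_le' hlo hhi ?_ ?_
    · filter_upwards with N
      rw [hsq, ← mul_div_assoc]
      have h1 := CoxCLT.ncSet_lower n N
      rw [← hkn] at h1
      have h1 := h1.trans (hlow N)
      gcongr
      exact_mod_cast h1
    · filter_upwards [eventually_gt_atTop 0] with N hN
      have hpos : (0 : ℝ) < (N : ℝ) ^ n := by positivity
      have h1 := CoxCLT.ncSet_upper n N
      rw [← hkn] at h1
      have h2 := (hup N).trans (Nat.add_le_add_right h1 _)
      have h3 : ((CoxCLT.oneSet cs s k N).ncard : ℝ) ≤ (catalan n : ℝ) * (N : ℝ) ^ n +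
        (k * (((k - 1) / 2 : ℕ) : ℝ) ^ k) * (N : ℝ) ^ ((k - 1) / 2) := by exact_mod_cast h2
      rw [hsq, div_le_iff₀ hpos, add_mul, div_mul_cancel₀ _ hpos.ne']
      exact h3
  · rw [if_neg hk]
    refine squeeze_zero (fun N => by positivity) (fun N => ?_)
      (CoxCLT.few_tendsto ((((k - 1) / 2 : ℕ) : ℝ) ^ k) k)
    have := hup N
    rw [CoxCLT.ncSet_odd k N hk, Set.ncard_empty, zero_add] at this
    gcongr
    exact_mod_cast this
end

section
/- Let M be an arbitrary Coxeter matrix on a type S with associated Coxeter system (W, cs). Let (w_1, …, w_r) be a word in S that defines a pair partition, and suppose there exist indices i < k < j < l and s, t ∈ S with s = w_i = w_j and t = w_k = w_l (so the pair partition contains this crossing). If cs.simple w_1 · … · cs.simple w_r = 1 in W, then M s t = 2. -/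
noncomputable section GeomRep

open Polynomial.Chebyshev

variable {S : Type*} (M : CoxeterMatrix S)

/-- The entries of the Cartan-type matrix `-2 cos(π / m)`; for `m = 0` this is `-2`. -/
def cartanEntry (s t : S) : ℝ := -2 * Real.cos (Real.pi / (M s t : ℝ))

theorem cartanEntry_symm (s t : S) : cartanEntry M s t = cartanEntry M t s := by
  unfold cartanEntry
  rw [M.symmetric s t]

theorem cartanEntry_self (s : S) : cartanEntry M s s = 2 := by
  simp [cartanEntry]

theorem two_le_of_ne {s t : S} (h : s ≠ t) (h0 : M s t ≠ 0) : 2 ≤ M s t := by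
  have := M.off_diagonal s t h
  change M s t ≠ 1 at this
  omega

theorem angle_le {s t : S} (h : s ≠ t) : Real.pi / (M s t : ℝ) ≤ Real.pi / 2 := by
  by_cases h0 : M s t = 0
  · simp [h0]; positivity
  · have h2 : (2 : ℝ) ≤ (M s t : ℝ) := by exact_mod_cast two_le_of_ne M h h0
    have := Real.pi_pos
    gcongr

theorem angle_nonneg (s t : S) : 0 ≤ Real.pi / (M s t : ℝ) := by
  have := Real.pi_pos
  positivity

theorem cartanEntry_nonpos {s t : S} (h : s ≠ t) : cartanEntry M s t ≤ 0 := by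
  have := Real.cos_nonneg_of_mem_Icc (x := Real.pi / (M s t : ℝ))
    ⟨by linarith [angle_nonneg M s t, Real.pi_pos], angle_le M h⟩
  unfold cartanEntry
  linarith

theorem eq_two_of_cartanEntry_eq_zero {s t : S} (h : s ≠ t) (h0 : cartanEntry M s t = 0) :
    M s t = 2 := by
  have hc : Real.cos (Real.pi / (M s t : ℝ)) = 0 := by
    unfold cartanEntry at h0
    linarith
  by_contra hne
  have hlt : Real.pi / (M s t : ℝ) < Real.pi / 2 := by
    by_cases hz : M s t = 0
    · simp [hz]; positivity
    · have h2 := two_le_of_ne M h hz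
      have h3 : (2 : ℝ) < (M s t : ℝ) := by
        exact_mod_cast lt_of_le_of_ne h2 (Ne.symm hne)
      have := Real.pi_pos
      gcongr
  have := Real.cos_pos_of_mem_Ioo (x := Real.pi / (M s t : ℝ))
    ⟨by linarith [angle_nonneg M s t, Real.pi_pos], hlt⟩
  linarith

/-- The simple coroot, as a linear form on the free module on `S`. -/
def coroot (s : S) : Module.Dual ℝ (S →₀ ℝ) :=
  Finsupp.linearCombination ℝ (fun t => cartanEntry M s t)

/-- The simple root. -/
def sroot (s : S) : S →₀ ℝ := Finsupp.single s 1

theorem coroot_sroot (s t : S) : coroot M s (sroot t) = cartanEntry M s t := by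
  simp [coroot, sroot, Finsupp.linearCombination_single]

theorem coroot_self (s : S) : coroot M s (sroot s) = 2 := by
  rw [coroot_sroot, cartanEntry_self]

/-- The simple reflection in the geometric representation. -/
def srefl (s : S) : (S →₀ ℝ) ≃ₗ[ℝ] (S →₀ ℝ) := Module.reflection (coroot_self M s)

theorem srefl_apply (s : S) (v : S →₀ ℝ) : srefl M s v = v - coroot M s v • sroot s :=
  Module.reflection_apply _ _

theorem srefl_mul_self (s : S) : srefl M s * srefl M s = 1 := by
  ext1 v
  simp only [LinearEquiv.mul_apply, srefl_apply, map_sub, map_smul, coroot_self,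
    LinearEquiv.coe_one, id]
  module

theorem srefl_liftable : M.IsLiftable (srefl M) := by
  intro s t
  by_cases hst : s = t
  · subst hst
    rw [srefl_mul_self, one_pow]
  by_cases h0 : M s t = 0
  · rw [h0, pow_zero]
  have h2 := two_le_of_ne M hst h0
  rcases h2.eq_or_lt with h2 | h3
  · -- commuting case
    have e1 : coroot M s (sroot t) = 0 := by
      rw [coroot_sroot, cartanEntry, ← h2]; simp
    have e2 : coroot M t (sroot s) = 0 := by
      rw [coroot_sroot, cartanEntry_symm, cartanEntry, ← h2]; simp
    rw [← h2]
    ext1 v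
    simp only [pow_two, LinearEquiv.mul_apply, srefl_apply, map_sub, map_smul, coroot_self, e1, e2,
      LinearEquiv.coe_one, id]
    module
  · set m := M s t with hm
    set θ : ℝ := Real.pi / (m : ℝ) with hθ
    have hm0 : (m : ℝ) ≠ 0 := by exact_mod_cast h0
    have hm3 : (3 : ℝ) ≤ (m : ℝ) := by exact_mod_cast h3
    have hθm : (m : ℝ) * θ = Real.pi := by rw [hθ]; field_simp
    have hsin : Real.sin (2 * θ) ≠ 0 := by
      have hpos : 0 < θ := by rw [hθ]; have := Real.pi_pos; positivity
      apply ne_of_gt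
      apply Real.sin_pos_of_pos_of_lt_pi
      · linarith
      · nlinarith
    have ht : 2 * Real.cos (2 * θ) = coroot M s (sroot t) * coroot M t (sroot s) - 2 := by
      rw [coroot_sroot, coroot_sroot, cartanEntry_symm M t s, cartanEntry, ← hm, ← hθ,
        Real.cos_two_mul]
      ring
    have hS (n : ℤ) := S_two_mul_real_cos (2 * θ) n
    ext1 v
    unfold srefl
    rw [Module.reflection_mul_reflection_pow_apply _ _ m v _ ht]
    rcases Nat.even_or_odd' m with ⟨q, hq | hq⟩
    · have a1 : ((m : ℤ) - 2) / 2 = q - 1 := by omega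
      have a2 : ((m : ℤ) - 1) / 2 = q - 1 := by omega
      have hz : (Polynomial.Chebyshev.S ℝ (q - 1)).eval (2 * Real.cos (2 * θ)) = 0 := by
        have := hS (q - 1)
        have e : (((q : ℤ) - 1 : ℤ) + 1 : ℝ) * (2 * θ) = Real.pi := by
          rw [← hθm, hq]; push_cast; ring
        rw [e, Real.sin_pi] at this
        exact (mul_eq_zero.1 this).resolve_right hsin
      rw [a1, a2, hz]
      simp
    · have a1 : ((m : ℤ) - 2) / 2 = q - 1 := by omega
      have a2 : ((m : ℤ) - 1) / 2 = q := by omega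
      have a3 : ((m : ℤ) - 3) / 2 = q - 1 := by omega
      have a4 : (m : ℤ) / 2 = q := by omega
      have hz : (Polynomial.Chebyshev.S ℝ q).eval (2 * Real.cos (2 * θ)) +
          (Polynomial.Chebyshev.S ℝ (q - 1)).eval (2 * Real.cos (2 * θ)) = 0 := by
        have h1 := hS q
        have h2 := hS (q - 1)
        have e1 : (((q : ℤ) : ℝ) + 1) * (2 * θ) = θ + Real.pi := by
          rw [← hθm, hq]; push_cast; ring
        have e2 : (((q : ℤ) - 1 : ℤ) + 1 : ℝ) * (2 * θ) = Real.pi - θ := by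
          rw [← hθm, hq]; push_cast; ring
        rw [e1, Real.sin_add_pi] at h1
        rw [e2, Real.sin_pi_sub] at h2
        have : ((Polynomial.Chebyshev.S ℝ q).eval (2 * Real.cos (2 * θ)) +
          (Polynomial.Chebyshev.S ℝ (q - 1)).eval (2 * Real.cos (2 * θ))) *
            Real.sin (2 * θ) = 0 := by
          rw [add_mul, h1, h2]; ring
        exact (mul_eq_zero.1 this).resolve_right hsin
      rw [a1, a2, a3, a4, hz]
      simp

variable {M} {W : Type*} [Group W] (cs : CoxeterSystem M W)

/-- The geometric representation. -/
def geomRep : W →* ((S →₀ ℝ) ≃ₗ[ℝ] (S →₀ ℝ)) := cs.lift ⟨srefl M, srefl_liftable M⟩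

theorem geomRep_simple (s : S) : geomRep cs (cs.simple s) = srefl M s :=
  cs.lift_apply_simple (srefl_liftable M) s

theorem srefl_apply_coord_ne {s u : S} (h : u ≠ s) (v : S →₀ ℝ) : srefl M s v u = v u := by
  rw [srefl_apply]
  simp [sroot, h.symm]

theorem srefl_apply_coord_self (s : S) (v : S →₀ ℝ) : srefl M s v s = v s - coroot M s v := by
  rw [srefl_apply]
  simp [sroot]

/-- A word that avoids `u` does not change the `u`-coordinate. -/
theorem geomRep_word_coord {u : S} (L : List S) (h : u ∉ L) (v : S →₀ ℝ) :
    geomRep cs (cs.wordProd L) v u = v u := by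
  induction L with
  | nil => simp
  | cons a L ih =>
    rw [cs.wordProd_cons, map_mul, LinearEquiv.mul_apply, geomRep_simple,
      srefl_apply_coord_ne (by rintro rfl; simp at h), ih (by simp at h; exact h.2)]

/-- Recursive coefficients for the action of a dihedral subgroup. -/
def dcoef (m : ℕ) : ℕ → ℝ
  | 0 => 0
  | 1 => 1
  | (k + 2) => 2 * Real.cos (Real.pi / (m : ℝ)) * dcoef m (k + 1) - dcoef m k

theorem dcoef_mul_sin (m k : ℕ) :
    dcoef m k * Real.sin (Real.pi / (m : ℝ)) = Real.sin (k * (Real.pi / (m : ℝ))) ∧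
    dcoef m (k + 1) * Real.sin (Real.pi / (m : ℝ)) =
      Real.sin ((k + 1) * (Real.pi / (m : ℝ))) := by
  induction k with
  | zero => simp [dcoef]
  | succ k ih =>
    obtain ⟨h1, h2⟩ := ih
    refine ⟨by rw [h2]; push_cast; rfl, ?_⟩
    rw [dcoef, sub_mul, mul_assoc, h1, h2]
    push_cast
    set θ := Real.pi / (m : ℝ)
    have e1 : ((k : ℝ) + 1 + 1) * θ = (k + 1) * θ + θ := by ring
    have e2 : (k : ℝ) * θ = (k + 1) * θ - θ := by ring
    rw [e1, e2, Real.sin_add, Real.sin_sub]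
    ring

theorem dcoef_zero_m (k : ℕ) : dcoef 0 k = k ∧ dcoef 0 (k + 1) = k + 1 := by
  induction k with
  | zero => simp [dcoef]
  | succ k ih =>
    refine ⟨by rw [ih.2]; push_cast; rfl, ?_⟩
    rw [dcoef, ih.1, ih.2]
    simp
    ring

theorem dcoef_nonneg {m k : ℕ} (hm : m ≠ 1) (hk : m = 0 ∨ k ≤ m) : 0 ≤ dcoef m k := by
  by_cases h0 : m = 0
  · subst h0
    rw [(dcoef_zero_m k).1]
    positivity
  have hk : k ≤ m := hk.resolve_left h0
  have hm2 : (2 : ℝ) ≤ m := by exact_mod_cast (show 2 ≤ m by omega)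
  have hpi := Real.pi_pos
  have hkm : (k : ℝ) ≤ m := by exact_mod_cast hk
  have hθm : (m : ℝ) * (Real.pi / (m : ℝ)) = Real.pi := by field_simp
  have hθ : 0 < Real.pi / (m : ℝ) := by positivity
  have hs : 0 < Real.sin (Real.pi / (m : ℝ)) := by
    apply Real.sin_pos_of_pos_of_lt_pi hθ
    nlinarith
  have h1 := (dcoef_mul_sin m k).1
  have h2 : 0 ≤ Real.sin (k * (Real.pi / (m : ℝ))) := by
    apply Real.sin_nonneg_of_nonneg_of_le_pi (by positivity)
    nlinarith
  rw [← h1] at h2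
  exact nonneg_of_mul_nonneg_left h2 hs

theorem srefl_sroot (s t : S) :
    srefl M t (sroot s) = sroot s + (2 * Real.cos (Real.pi / (M s t : ℝ))) • sroot t := by
  rw [srefl_apply, coroot_sroot, cartanEntry_symm, cartanEntry]
  module

theorem srefl_self (s : S) : srefl M s (sroot s) = - sroot s := by
  rw [srefl_apply, coroot_self]
  module

open CoxeterSystem in
theorem geomRep_alternating (s t : S) (k : ℕ) :
    geomRep cs (cs.wordProd (alternatingWord s t k)) (sroot s) =
      dcoef (M s t) (k + 1) • sroot (if Even k then s else t) +
      dcoef (M s t) k • sroot (if Even k then t else s) := by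
  induction k with
  | zero => simp [alternatingWord, dcoef]
  | succ k ih =>
    rw [alternatingWord_succ', cs.wordProd_cons, map_mul, LinearEquiv.mul_apply, ih,
      geomRep_simple]
    by_cases hk : Even k
    · have hk' : ¬ Even (k + 1) := by simpa [Nat.even_add_one] using hk
      simp only [hk, hk', if_true, if_false, map_add, map_smul, srefl_sroot s t, srefl_self]
      rw [dcoef]
      module
    · have hk' : Even (k + 1) := by simpa [Nat.even_add_one] using hk
      simp only [hk, hk', if_true, if_false, map_add, map_smul, srefl_sroot t s, srefl_self]
      rw [dcoef, M.symmetric t s]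
      module

open CoxeterSystem in
theorem geomRep_nonneg (n : ℕ) : ∀ (w : W) (s : S), cs.length w = n →
    ¬ cs.IsRightDescent w s → 0 ≤ geomRep cs w (sroot s) := by
  induction n using Nat.strong_induction_on with
  | _ n ih =>
  intro w s hn hs
  by_cases hw1 : w = 1
  · subst hw1
    simp [sroot]
  obtain ⟨t, ht⟩ := cs.exists_rightDescent_of_ne_one hw1
  have hst : s ≠ t := by rintro rfl; exact hs ht
  -- choose the longest alternating suffix
  let P : ℕ → Prop := fun k => ∃ v : W, w = v * cs.wordProd (alternatingWord s t k) ∧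
    cs.length v + k = cs.length w
  have hP1 : P 1 := by
    refine ⟨w * cs.simple t, ?_, ?_⟩
    · simp [alternatingWord]
    · exact cs.isRightDescent_iff.1 ht
  classical
  have hbound : ∀ k, P k → k ≤ n := by
    rintro k ⟨v, -, h⟩
    omega
  have hn1 : 1 ≤ n := hbound 1 hP1
  have hPk := Nat.findGreatest_spec (P := P) hn1 hP1
  have hk1 := Nat.le_findGreatest (P := P) hn1 hP1
  have hmax : ¬ P (Nat.findGreatest P n + 1) := by
    intro h
    have := Nat.le_findGreatest (P := P) (hbound _ h) h
    omega
  revert hPk hk1 hmax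
  generalize Nat.findGreatest P n = k
  rintro ⟨v, hv, hlen⟩ hk1 hmax
  have hlt : cs.length v < n := by omega
  -- next letter
  have hp : ¬ cs.IsRightDescent v (if Even k then t else s) := by
    intro h
    apply hmax
    refine ⟨v * cs.simple (if Even k then t else s), ?_, ?_⟩
    · rw [alternatingWord_succ', cs.wordProd_cons, hv]
      simp [mul_assoc]
    · have := cs.isRightDescent_iff.1 h
      omega
  have hq : ¬ cs.IsRightDescent v (if Even k then s else t) := by
    intro h
    obtain ⟨k', rfl⟩ : ∃ k', k = k' + 1 := ⟨k - 1, by omega⟩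
    have h1 := cs.isRightDescent_iff.1 h
    have e : (if Even (k' + 1) then s else t) = (if Even k' then t else s) := by
      by_cases hk : Even k'
      · have : ¬ Even (k' + 1) := by simpa [Nat.even_add_one] using hk
        simp only [hk, this, if_true, if_false]
      · have : Even (k' + 1) := by simpa [Nat.even_add_one] using hk
        simp only [hk, this, if_true, if_false]
    rw [e] at h1
    rw [alternatingWord_succ', cs.wordProd_cons, ← mul_assoc] at hv
    have h2 := cs.length_mul_le (v * cs.simple (if Even k' then t else s))
      (cs.wordProd (alternatingWord s t k'))
    have h3 := cs.length_wordProd_le (alternatingWord s t k')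
    rw [length_alternatingWord] at h3
    rw [← hv] at h2
    omega
  have hkm : M s t = 0 ∨ k + 1 ≤ M s t := by
    by_contra! hcon
    obtain ⟨h0, hle⟩ := hcon
    have hle := Nat.lt_succ_iff.1 hle
    rcases hle.eq_or_lt with heq | hgt
    · -- braid relation
      apply hs
      have hb : cs.wordProd (alternatingWord s t k) = cs.wordProd (alternatingWord t s k) := by
        have := cs.wordProd_braidWord_eq s t
        unfold braidWord at this
        rw [M.symmetric t s, heq] at this
        exact this
      obtain ⟨k', rfl⟩ : ∃ k', k = k' + 1 := ⟨k - 1, by omega⟩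
      rw [hb, alternatingWord_succ, cs.wordProd_concat] at hv
      have e : w * cs.simple s = v * cs.wordProd (alternatingWord s t k') := by
        rw [hv]; simp [mul_assoc]
      unfold IsRightDescent
      rw [e]
      have h2 := cs.length_mul_le v (cs.wordProd (alternatingWord s t k'))
      have h3 := cs.length_wordProd_le (alternatingWord s t k')
      rw [length_alternatingWord] at h3
      omega
    · have h1 := cs.not_isReduced_alternatingWord s t h0 hgt
      have h3 := cs.length_wordProd_le (alternatingWord s t k)
      unfold CoxeterSystem.IsReduced at h1
      rw [length_alternatingWord] at h1 h3
      have h2 := cs.length_mul_le v (cs.wordProd (alternatingWord s t k))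
      rw [← hv] at h2
      omega
  have hm1 : M s t ≠ 1 := M.off_diagonal s t hst
  rw [hv, map_mul, LinearEquiv.mul_apply, geomRep_alternating, map_add, map_smul, map_smul]
  have c1 := dcoef_nonneg (k := k + 1) hm1 hkm
  have c2 := dcoef_nonneg (k := k) hm1 (hkm.imp_right (by omega))
  exact add_nonneg (smul_nonneg c1 (ih _ hlt v _ rfl hq)) (smul_nonneg c2 (ih _ hlt v _ rfl hp))

theorem geomRep_word_nonneg {s : S} (L : List S) (h : s ∉ L) :
    0 ≤ geomRep cs (cs.wordProd L) (sroot s) := by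
  apply geomRep_nonneg cs _ _ _ rfl
  intro hd
  have h1 := geomRep_nonneg cs _ _ _ rfl (cs.isRightDescent_iff_not_isRightDescent_mul.1 hd)
  rw [map_mul, LinearEquiv.mul_apply, geomRep_simple, srefl_self, map_neg] at h1
  have h2 := h1 s
  rw [Finsupp.neg_apply, geomRep_word_coord cs L h] at h2
  simp [sroot] at h2
  linarith

theorem key_crossing {s t : S} (hst : s ≠ t) (a b₁ b₂ c : List S)
    (ha : s ∉ a) (hb₁ : s ∉ b₁) (hb₂ : s ∉ b₂) (hc : s ∉ c) (ht₁ : t ∉ b₁) (ht₂ : t ∉ b₂)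
    (h : cs.wordProd (a ++ s :: (b₁ ++ t :: b₂) ++ s :: c) = 1) : M s t = 2 := by
  have hd : cs.simple s * cs.wordProd (b₁ ++ t :: b₂) =
      cs.wordProd (a.reverse ++ c.reverse) * cs.simple s := by
    rw [cs.wordProd_append a.reverse, cs.wordProd_reverse, cs.wordProd_reverse]
    rw [cs.wordProd_append, cs.wordProd_append, cs.wordProd_cons, cs.wordProd_cons] at h
    generalize cs.wordProd (b₁ ++ t :: b₂) = x at *
    generalize cs.wordProd a = y at *
    generalize cs.wordProd c = z at *
    have h' : y * (cs.simple s * x) = (cs.simple s * z)⁻¹ := eq_inv_of_mul_eq_one_left h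
    rw [eq_comm, mul_assoc, inv_mul_eq_iff_eq_mul, h', mul_inv_rev, cs.inv_simple]
  have hpb := geomRep_word_nonneg cs (s := s) (b₁ ++ t :: b₂) (by simp [hb₁, hb₂, hst])
  have hpd := geomRep_word_nonneg cs (s := s) (a.reverse ++ c.reverse) (by simp [ha, hc])
  have h0 : geomRep cs (cs.wordProd (b₁ ++ t :: b₂)) (sroot s) t = 0 := by
    have e := congrArg (fun g => geomRep cs g (sroot s) t) hd
    simp only [map_mul, LinearEquiv.mul_apply, geomRep_simple, srefl_self, map_neg,
      Finsupp.neg_apply] at e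
    rw [srefl_apply_coord_ne hst.symm] at e
    have i1 := hpb t
    have i2 := hpd t
    simp only [Finsupp.coe_zero, Pi.zero_apply] at i1 i2
    linarith
  have hy := geomRep_word_nonneg cs (s := s) b₂ hb₂
  have hys := geomRep_word_coord cs b₂ hb₂ (sroot s)
  have hyt := geomRep_word_coord cs b₂ ht₂ (sroot s)
  rw [cs.wordProd_append, cs.wordProd_cons, map_mul, map_mul, LinearEquiv.mul_apply,
    LinearEquiv.mul_apply, geomRep_word_coord cs b₁ ht₁, geomRep_simple,
    srefl_apply_coord_self] at h0
  generalize geomRep cs (cs.wordProd b₂) (sroot s) = y at *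
  simp [sroot, hst] at hys hyt
  rw [hyt, zero_sub, neg_eq_zero, coroot, Finsupp.linearCombination_apply, Finsupp.sum] at h0
  rw [Finset.sum_eq_zero_iff_of_nonpos] at h0
  · have := h0 s (by simp [hys])
    rw [hys, one_smul] at this
    exact eq_two_of_cartanEntry_eq_zero M hst (by rw [cartanEntry_symm, this])
  · intro u _
    by_cases hu : u = t
    · subst hu; simp [hyt]
    · exact mul_nonpos_of_nonneg_of_nonpos (hy u) (cartanEntry_nonpos M (Ne.symm hu))

end GeomRep

/-- Let `M` be an arbitrary Coxeter matrix on `S` with associated Coxeter system `(W, cs)`.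
Let `(w₁, …, w_r)` be a word defining a pair partition, and suppose there are indices
`i < k < j < l` and `s, t ∈ S` with `s = w i = w j` and `t = w k = w l` (a crossing).
If `w₁ ⋯ w_r = 1` in `W`, then `M s t = 2`. -/
theorem M_eq_two_of_crossing {S : Type*} (M : CoxeterMatrix S)
    {W : Type*} [Group W] (cs : CoxeterSystem M W)
    {r : ℕ} (w : Fin r → S)
    (hpair : ∀ i, Nat.card {j : Fin r // w j = w i} = 2)
    (i k j l : Fin r) (hik : i < k) (hkj : k < j) (hjl : j < l)
    (s t : S) (hsi : w i = s) (hsj : w j = s) (htk : w k = t) (htl : w l = t)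
    (hprod : cs.wordProd (List.ofFn w) = 1) :
    M s t = 2 := by
  -- each fiber has at most two elements
  have hfib : ∀ x y z : Fin r, x ≠ y → w x = w y → w z = w x → z = x ∨ z = y := by
    intro x y z hxy hxy' hzx
    have h2 := hpair x
    rw [Nat.card_eq_two_iff' (⟨x, rfl⟩ : {j : Fin r // w j = w x})] at h2
    obtain ⟨u, -, huni⟩ := h2
    by_cases hz : z = x
    · exact Or.inl hz
    · right
      have e1 := huni ⟨y, hxy'.symm⟩ (by simpa using hxy.symm)
      have e2 := huni ⟨z, hzx⟩ (by simpa using hz)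
      exact congrArg Subtype.val (e2.trans e1.symm)
  have hs : ∀ z, w z = s → z = i ∨ z = j := fun z hz =>
    hfib i j z (hik.trans hkj).ne (hsi.trans hsj.symm) (hz.trans hsi.symm)
  have ht : ∀ z, w z = t → z = k ∨ z = l := fun z hz =>
    hfib k l z (hkj.trans hjl).ne (htk.trans htl.symm) (hz.trans htk.symm)
  have hst : s ≠ t := by
    rintro rfl
    rcases hs k htk with h | h
    · exact hik.ne h.symm
    · exact hkj.ne h
  set L := List.ofFn w with hL
  have hlen : L.length = r := by simp [hL]
  -- a segment of the word
  let seg : ℕ → ℕ → List S := fun p q => (L.take q).drop p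
  have hseg : ∀ p q x, x ∈ seg p q → ∃ z : Fin r, p ≤ z ∧ (z : ℕ) < q ∧ w z = x := by
    intro p q x hx
    obtain ⟨n, hn, rfl⟩ := List.mem_iff_getElem.1 hx
    simp only [seg, List.length_drop, List.length_take, hlen] at hn
    refine ⟨⟨p + n, by omega⟩, by simp, by simp; omega, ?_⟩
    simp [seg, hL]
  have hsplit : ∀ (p q : ℕ) (z : Fin r), p ≤ z → (z : ℕ) < q →
      seg p q = seg p z ++ w z :: seg (z + 1) q := by
    intro p q z hp hq
    simp only [seg]
    have h1 : (L.take q).take z = L.take z := by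
      rw [List.take_take]; congr 1; omega
    have hz : (z : ℕ) < (L.take q).length := by
      have := z.2
      simp only [List.length_take, hlen]; omega
    have h2 : L.take q = L.take z ++ w z :: (L.take q).drop (z + 1) := by
      have e := List.take_append_drop (z : ℕ) (L.take q)
      rw [List.drop_eq_getElem_cons hz, h1] at e
      have e' : (L.take q)[(z : ℕ)] = w z := by simp [hL]
      rw [e'] at e
      exact e.symm
    conv_lhs => rw [h2]
    rw [List.drop_append_of_le_length]
    simp only [List.length_take, hlen]
    have := z.2
    omega
  have hfull : L = seg 0 r := by simp [seg, ← hlen]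
  have hik' : (i : ℕ) < k := hik
  have hkj' : (k : ℕ) < j := hkj
  have hjl' : (j : ℕ) < l := hjl
  rw [hfull, hsplit 0 r j (by omega) j.2, hsplit 0 j i (by omega) (by omega),
    hsplit (i + 1) j k (by omega) (by omega), hsi, hsj, htk] at hprod
  have hns : ∀ p q : ℕ, (i < p ∨ q ≤ i) → (j < p ∨ q ≤ j) → s ∉ seg p q := by
    intro p q h1 h2 hmem
    obtain ⟨z, hz1, hz2, hz3⟩ := hseg p q s hmem
    rcases hs z hz3 with rfl | rfl <;> omega
  have hnt : ∀ p q : ℕ, (k < p ∨ q ≤ k) → (l < p ∨ q ≤ l) → t ∉ seg p q := by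
    intro p q h1 h2 hmem
    obtain ⟨z, hz1, hz2, hz3⟩ := hseg p q t hmem
    rcases ht z hz3 with rfl | rfl <;> omega
  refine key_crossing cs hst _ _ _ _ ?_ ?_ ?_ ?_ ?_ ?_ hprod
  · exact hns _ _ (by omega) (by omega)
  · exact hns _ _ (by omega) (by omega)
  · exact hns _ _ (by omega) (by omega)
  · exact hns _ _ (by omega) (by omega)
  · exact hnt _ _ (by omega) (by omega)
  · exact hnt _ _ (by omega) (by omega)
end

section
/- Let M be an arbitrary Coxeter matrix on a type S with associated Coxeter system (W, cs). Let w = (w_1, …, w_{2r}) be a word in S defining a pair partition V of {1, …, 2r}, with blocks {e_1, f_1}, …, {e_r, f_r} where e_i < f_i and e_1 < e_2 < … < e_r, and let t_i(w) = w_{e_i} ∈ S be the label of the i-th block. Then cs.simple w_1 · … · cs.simple w_{2r} = 1 in W if and only if M (t_i(w)) (t_j(w)) = 2 for every inversion (i, j) ∈ I(V). -/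
namespace PairWord

open Real Module

variable {S : Type*} (M : CoxeterMatrix S)

/-- Off-diagonal coefficient `2 cos (π / m)`; it equals `2` when `m = 0`, encoding infinity. -/
noncomputable def cc (s t : S) : ℝ := 2 * cos (π / (M s t : ℝ))

/-- The functional `2 B(α_s, ·)`. -/
noncomputable def phi (s : S) : Dual ℝ (S →₀ ℝ) :=
  Finsupp.linearCombination ℝ (fun t => -cc M s t)

/-- Simple roots. -/
noncomputable def al (s : S) : S →₀ ℝ := Finsupp.single s 1

theorem cc_symm (s t : S) : cc M s t = cc M t s := by
  unfold cc; rw [M.symmetric]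

theorem cc_self (s : S) : cc M s s = -2 := by
  simp [cc]

theorem phi_al (s t : S) : phi M s (al t) = -cc M s t := by
  simp [phi, al]

theorem phi_self (s : S) : phi M s (al s) = 2 := by
  rw [phi_al, cc_self]; norm_num

theorem cc_nonneg {s t : S} (h : s ≠ t) : 0 ≤ cc M s t := by
  unfold cc
  have h1 := M.off_diagonal s t h
  refine mul_nonneg (by norm_num) (cos_nonneg_of_neg_pi_div_two_le_of_le ?_ ?_)
  · have : 0 ≤ π / (M s t : ℝ) := by positivity
    linarith [pi_pos]
  · rcases Nat.eq_zero_or_pos (M s t) with h0 | h0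
    · rw [h0]; simp; positivity
    · have : (2 : ℝ) ≤ M s t := by exact_mod_cast (by omega : 2 ≤ M s t)
      exact div_le_div_of_nonneg_left pi_pos.le (by norm_num) this

theorem eq_two_of_cc_nonpos {s t : S} (h : s ≠ t) (hc : cc M s t ≤ 0) : M s t = 2 := by
  by_contra h2
  have h1 := M.off_diagonal s t h
  have : 0 < cc M s t := by
    unfold cc
    refine mul_pos (by norm_num) (cos_pos_of_mem_Ioo ⟨?_, ?_⟩)
    · have : 0 ≤ π / (M s t : ℝ) := by positivity
      linarith [pi_pos]
    · rcases Nat.eq_zero_or_pos (M s t) with h0 | h0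
      · rw [h0]; simp; positivity
      · have : (2 : ℝ) < M s t := by exact_mod_cast (by omega : 2 < M s t)
        exact div_lt_div_of_pos_left pi_pos (by norm_num) this
  linarith

theorem S_eval_rel (θ : ℝ) (hθ : sin θ ≠ 0) (n : ℤ) :
    (Polynomial.Chebyshev.S ℝ n).eval (2 * cos θ) = sin ((n + 1) * θ) / sin θ := by
  rw [eq_div_iff hθ]
  exact Polynomial.Chebyshev.S_two_mul_real_cos θ n

theorem refl_liftable :
    M.IsLiftable (fun s => (reflection (phi_self M s) : (S →₀ ℝ) ≃ₗ[ℝ] (S →₀ ℝ))) := by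
  intro s t
  ext1 z
  by_cases hst : s = t
  · subst hst
    rw [M.diagonal, pow_one]
    exact involutive_reflection (phi_self M s) z
  have h1 := M.off_diagonal s t hst
  rcases Nat.eq_zero_or_pos (M s t) with h0 | h0
  · rw [h0]; simp
  by_cases h2 : M s t = 2
  · have e1 : phi M s (al t) = 0 := by rw [phi_al, cc, h2]; simp
    have e2 : phi M t (al s) = 0 := by rw [phi_al, cc_symm, cc, h2]; simp
    have f1 := phi_self M s
    have f2 := phi_self M t
    rw [h2, pow_two]
    simp only [LinearEquiv.mul_apply, reflection_apply, map_sub, map_smul, e1, e2, f1, f2]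
    simp
    module
  have h3 : 3 ≤ M s t := by omega
  generalize hm : M s t = m at *
  have hmpos : (3 : ℝ) ≤ m := by exact_mod_cast h3
  have hsin : sin (2 * π / m) ≠ 0 := by
    apply ne_of_gt
    apply sin_pos_of_pos_of_lt_pi
    · have := pi_pos; positivity
    · rw [div_lt_iff₀ (by linarith)]; nlinarith [pi_pos]
  have ht : 2 * cos (2 * π / m) = phi M s (al t) * phi M t (al s) - 2 := by
    rw [phi_al, phi_al, cc_symm M t s, cc, hm, mul_div_assoc, cos_two_mul]; ring
  rw [reflection_mul_reflection_pow_apply (phi_self M s) (phi_self M t) m z _ ht]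
  simp only [S_eval_rel _ hsin]
  have hm0 : (m : ℝ) ≠ 0 := by linarith
  rcases Nat.even_or_odd' m with ⟨n, hn | hn⟩
  · have a1 : ((m : ℤ) - 2) / 2 = n - 1 := by omega
    have a2 : ((m : ℤ) - 1) / 2 = n - 1 := by omega
    have a3 : sin ((((n : ℤ) - 1 : ℤ) + 1) * (2 * π / m)) = 0 := by
      rw [show ((((n : ℤ) - 1 : ℤ) : ℝ) + 1) * (2 * π / m) = π by
        have : (m : ℝ) = 2 * n := by exact_mod_cast hn
        push_cast; field_simp; rw [this]; ring]
      exact sin_pi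
    rw [a1, a2, a3]; simp
  · have a1 : ((m : ℤ) - 2) / 2 = n - 1 := by omega
    have a2 : ((m : ℤ) - 1) / 2 = n := by omega
    have a4 : ((m : ℤ) - 3) / 2 = n - 1 := by omega
    have a5 : (m : ℤ) / 2 = n := by omega
    have a3 : sin ((((n : ℤ) - 1 : ℤ) + 1) * (2 * π / m)) = - sin (((n : ℤ) + 1) * (2 * π / m)) := by
      rw [← sin_two_pi_sub]
      congr 1
      have : (m : ℝ) = 2 * n + 1 := by exact_mod_cast hn
      push_cast; field_simp; rw [this]; ring
    rw [a1, a2, a4, a5, a3]; simp [neg_div]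

variable {M} {W : Type*} [Group W] (cs : CoxeterSystem M W)

/-- The geometric representation. -/
noncomputable def rho : W →* ((S →₀ ℝ) ≃ₗ[ℝ] (S →₀ ℝ)) :=
  cs.lift ⟨_, refl_liftable M⟩

theorem rho_simple (s : S) (v : S →₀ ℝ) :
    rho cs (cs.simple s) v = v - phi M s v • al s := by
  rw [rho, CoxeterSystem.lift_apply_simple, reflection_apply]

theorem rho_mul (g h : W) (v : S →₀ ℝ) : rho cs (g * h) v = rho cs g (rho cs h v) := by
  rw [map_mul, LinearEquiv.mul_apply]

theorem rho_simple_al (s t : S) :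
    rho cs (cs.simple s) (al t) = al t + cc M s t • al s := by
  rw [rho_simple, phi_al]; simp

theorem rho_simple_self (s : S) :
    rho cs (cs.simple s) (al s) = - al s := by
  rw [rho_simple_al, cc_self]; module

/-- Chebyshev-type sequence. -/
def seq (c : ℝ) : ℕ → ℝ
  | 0 => 0
  | 1 => 1
  | (n + 2) => c * seq c (n + 1) - seq c n

theorem rho_alt (s t : S) (k : ℕ) :
    rho cs (cs.wordProd (CoxeterSystem.alternatingWord s t k)) (al s) =
      if Even k then seq (cc M s t) (k + 1) • al s + seq (cc M s t) k • al t
      else seq (cc M s t) (k + 1) • al t + seq (cc M s t) k • al s := by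
  induction k with
  | zero => simp [CoxeterSystem.alternatingWord, seq]
  | succ k ih =>
    rw [CoxeterSystem.alternatingWord_succ', CoxeterSystem.wordProd_cons, rho_mul, ih]
    by_cases hk : Even k
    · simp only [hk, if_true, Nat.even_add_one, not_true, if_false, map_add, map_smul,
        rho_simple_self, rho_simple_al, seq, cc_symm M t s]
      module
    · simp only [hk, if_false, Nat.even_add_one, not_false_eq_true, if_true, map_add, map_smul,
        rho_simple_self, rho_simple_al, seq]
      module

theorem seq_sin (θ : ℝ) (n : ℕ) : seq (2 * cos θ) n * sin θ = sin (n * θ) := by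
  induction n using Nat.twoStepInduction with
  | zero => simp [seq]
  | one => simp [seq]
  | more n h1 h2 =>
    have e1 : ((n + 2 : ℕ) : ℝ) * θ = (n + 1 : ℕ) * θ + θ := by push_cast; ring
    have e2 : (n : ℝ) * θ = (n + 1 : ℕ) * θ - θ := by push_cast; ring
    rw [e1, seq, sub_mul, h1, e2, sin_add, sin_sub, mul_assoc, h2]; ring

theorem seq_two (n : ℕ) : seq 2 n = n := by
  induction n using Nat.twoStepInduction with
  | zero => simp [seq]
  | one => simp [seq]
  | more n h1 h2 => rw [seq, h1, h2]; push_cast; ring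

theorem seq_nonneg {s t : S} (hst : s ≠ t) (n : ℕ) (hn : M s t = 0 ∨ n ≤ M s t) :
    0 ≤ seq (cc M s t) n := by
  rcases Nat.eq_zero_or_pos (M s t) with h0 | h0
  · rw [cc, h0]; simp [seq_two]
  have h1 := M.off_diagonal s t hst
  have hn : n ≤ M s t := by omega
  have hm : (2 : ℝ) ≤ M s t := by exact_mod_cast (by omega : 2 ≤ M s t)
  have hsin : 0 < sin (π / (M s t : ℝ)) := by
    apply sin_pos_of_pos_of_lt_pi
    · have := pi_pos; positivity
    · rw [div_lt_iff₀ (by linarith)]; nlinarith [pi_pos]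
  have := seq_sin (π / (M s t : ℝ)) n
  rw [← eq_div_iff hsin.ne'] at this
  rw [cc, this]
  refine div_nonneg (sin_nonneg_of_nonneg_of_le_pi (by have := pi_pos; positivity) ?_) hsin.le
  rw [mul_div_assoc', div_le_iff₀ (by linarith), mul_comm]
  have : (n : ℝ) ≤ M s t := by exact_mod_cast hn
  exact mul_le_mul_of_nonneg_left this pi_pos.le

theorem pos_of_length_lt (n : ℕ) : ∀ (w : W) (s : S), cs.length w = n →
    cs.length w < cs.length (w * cs.simple s) → 0 ≤ rho cs w (al s) := by
  induction n using Nat.strong_induction_on with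
  | _ n IH =>
  intro w s hw hlt
  by_cases hw1 : w = 1
  · subst hw1
    simp [al]
  obtain ⟨t, ht⟩ := cs.exists_rightDescent_of_ne_one hw1
  have hst : s ≠ t := by
    rintro rfl
    exact absurd ht (not_lt.mpr hlt.le)
  -- maximal alternating suffix
  let P : ℕ → Prop := fun k => ∃ v : W, cs.length v + k = cs.length w ∧
    w = v * cs.wordProd (CoxeterSystem.alternatingWord s t k)
  have hP1 : P 1 := by
    refine ⟨w * cs.simple t, ?_, ?_⟩
    · exact cs.isRightDescent_iff.mp ht
    · simp [CoxeterSystem.alternatingWord]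
  classical
  have hb : ∀ k, P k → k ≤ n := by
    rintro k ⟨v, hv, -⟩; omega
  have hn1 := hb 1 hP1
  obtain ⟨v, hv, hwv⟩ := Nat.findGreatest_spec (P := P) hn1 hP1
  have hk1 : 1 ≤ Nat.findGreatest P n := Nat.le_findGreatest hn1 hP1
  have hmax : ¬ P (Nat.findGreatest P n + 1) := by
    intro h
    have := Nat.le_findGreatest (hb _ h) h
    omega
  generalize Nat.findGreatest P n = k at *
  -- next letter
  have hnext : cs.length v < cs.length (v * cs.simple (if Even k then t else s)) := by
    by_contra hcon
    apply hmax
    have hd : cs.IsRightDescent v (if Even k then t else s) := by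
      rw [CoxeterSystem.IsRightDescent]
      have := cs.length_mul_simple_ne v (if Even k then t else s)
      omega
    refine ⟨v * cs.simple (if Even k then t else s), ?_, ?_⟩
    · have := cs.isRightDescent_iff.mp hd
      omega
    · rw [CoxeterSystem.alternatingWord_succ', CoxeterSystem.wordProd_cons, hwv]
      simp [mul_assoc]
  have hprev : cs.length v < cs.length (v * cs.simple (if Even k then s else t)) := by
    obtain ⟨j, rfl⟩ : ∃ j, k = j + 1 := ⟨k - 1, by omega⟩
    rw [CoxeterSystem.alternatingWord_succ', CoxeterSystem.wordProd_cons, ← mul_assoc] at hwv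
    have e : (if Even (j + 1) then s else t) = (if Even j then t else s) := by
      by_cases hj : Even j <;> simp [hj, Nat.even_add_one, -Nat.not_even_iff_odd]
    rw [e]
    have h1 := cs.length_mul_le (v * cs.simple (if Even j then t else s))
      (cs.wordProd (CoxeterSystem.alternatingWord s t j))
    rw [← hwv] at h1
    have h2 := cs.length_wordProd_le (CoxeterSystem.alternatingWord s t j)
    rw [CoxeterSystem.length_alternatingWord] at h2
    omega
  have hvs : 0 ≤ rho cs v (al s) := by
    apply IH (cs.length v) (by omega) v s rfl
    by_cases hk : Even k
    · simpa [hk] using hprev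
    · simpa [hk] using hnext
  have hvt : 0 ≤ rho cs v (al t) := by
    apply IH (cs.length v) (by omega) v t rfl
    by_cases hk : Even k
    · simpa [hk] using hnext
    · simpa [hk] using hprev
  have hkm : M s t = 0 ∨ k + 1 ≤ M s t := by
    by_contra hcon
    push Not at hcon
    have hr : ¬ cs.IsReduced (CoxeterSystem.alternatingWord t s (k + 1)) :=
      cs.not_isReduced_alternatingWord t s (by rw [M.symmetric]; exact hcon.1)
        (by rw [M.symmetric]; exact hcon.2)
    apply hr
    have h1 : w * cs.simple s = v * cs.wordProd (CoxeterSystem.alternatingWord t s (k + 1)) := by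
      rw [CoxeterSystem.alternatingWord_succ, CoxeterSystem.wordProd_concat, hwv, mul_assoc]
    have h2 := cs.length_mul_le v (cs.wordProd (CoxeterSystem.alternatingWord t s (k + 1)))
    rw [← h1] at h2
    have h3 := cs.length_wordProd_le (CoxeterSystem.alternatingWord t s (k + 1))
    rw [CoxeterSystem.IsReduced]
    rw [CoxeterSystem.length_alternatingWord] at h3 ⊢
    omega
  have q1 : 0 ≤ seq (cc M s t) (k + 1) := seq_nonneg hst _ hkm
  have q2 : 0 ≤ seq (cc M s t) k := seq_nonneg hst _ (by omega)
  rw [hwv, rho_mul, rho_alt]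
  split_ifs
  · rw [map_add, map_smul, map_smul]
    exact add_nonneg (smul_nonneg q1 hvs) (smul_nonneg q2 hvt)
  · rw [map_add, map_smul, map_smul]
    exact add_nonneg (smul_nonneg q1 hvt) (smul_nonneg q2 hvs)

theorem coord_of_not_mem (s : S) (L : List S) (h : s ∉ L) (v : S →₀ ℝ) :
    rho cs (cs.wordProd L) v s = v s := by
  induction L with
  | nil => simp
  | cons a L ih =>
    simp only [List.mem_cons, not_or] at h
    rw [CoxeterSystem.wordProd_cons, rho_mul, rho_simple, ← ih h.2]
    simp [al, Ne.symm h.1]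

theorem pos_of_not_mem (s : S) (L : List S) (h : s ∉ L) :
    0 ≤ rho cs (cs.wordProd L) (al s) := by
  rcases lt_or_gt_of_ne (cs.length_mul_simple_ne (cs.wordProd L) s) with h1 | h1
  · exfalso
    have := pos_of_length_lt cs _ (cs.wordProd L * cs.simple s) s rfl (by simpa using h1)
    rw [rho_mul, rho_simple_self, map_neg] at this
    have h2 := this s
    rw [Finsupp.neg_apply, coord_of_not_mem cs s L h] at h2
    simp [al] at h2
    linarith
  · exact pos_of_length_lt cs _ _ s rfl h1

theorem phi_le (t a : S) (hta : t ≠ a) (v : S →₀ ℝ) (hv : 0 ≤ v) (hvt : v t = 0) :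
    phi M t v ≤ - (cc M t a * v a) := by
  classical
  have h1 : phi M t v = phi M t (v.erase a) + phi M t (Finsupp.single a (v a)) := by
    rw [← map_add, Finsupp.erase_add_single]
  have h2 : phi M t (Finsupp.single a (v a)) = -(cc M t a * v a) := by
    simp [phi, mul_comm]
  have h3 : phi M t (v.erase a) ≤ 0 := by
    rw [phi, Finsupp.linearCombination_apply, Finsupp.sum]
    apply Finset.sum_nonpos
    intro u _
    rw [smul_eq_mul, Finsupp.erase_apply]
    split_ifs with hu
    · simp
    by_cases hut : u = t
    · subst hut; rw [hvt]; simp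
    · have := cc_nonneg M (Ne.symm hut)
      have := hv u
      simp at this
      nlinarith
  linarith

theorem coord_ge (a b : S) (hab : a ≠ b) (Q R : List S) (haR : a ∉ R)
    (hbQ : b ∉ Q) (hbR : b ∉ R) :
    cc M a b ≤ rho cs (cs.wordProd (Q ++ b :: R)) (al a) b := by
  rw [CoxeterSystem.wordProd_append, CoxeterSystem.wordProd_cons, rho_mul,
    coord_of_not_mem cs b Q hbQ, rho_mul, rho_simple]
  have h1 : rho cs (cs.wordProd R) (al a) b = 0 := by
    rw [coord_of_not_mem cs b R hbR]; simp [al, hab]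
  have h2 : rho cs (cs.wordProd R) (al a) a = 1 := by
    rw [coord_of_not_mem cs a R haR]; simp [al]
  have h3 := phi_le (M := M) b a hab.symm _ (pos_of_not_mem cs a R haR) h1
  rw [h2, cc_symm M b a] at h3
  rw [Finsupp.sub_apply, h1, Finsupp.smul_apply]
  have h4 : (al b : S →₀ ℝ) b = 1 := by simp [al]
  rw [h4, smul_eq_mul]
  linarith

theorem core (a b : S) (hab : a ≠ b) (Q R T U : List S)
    (haR : a ∉ R) (hbQ : b ∉ Q) (hbR : b ∉ R)
    (haT : a ∉ T) (hbT : b ∉ T) (hbU : b ∉ U)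
    (h : cs.simple a * cs.wordProd (Q ++ b :: R) * cs.simple a * cs.wordProd (T ++ b :: U) = 1) :
    M a b = 2 := by
  apply eq_two_of_cc_nonpos M hab
  have h1 := coord_ge cs a b hab Q R haR hbQ hbR
  have h2 := coord_ge cs a b hab U.reverse T.reverse (by simpa) (by simpa) (by simpa)
  have e : U.reverse ++ b :: T.reverse = (T ++ b :: U).reverse := by simp
  rw [e, CoxeterSystem.wordProd_reverse, ← eq_inv_of_mul_eq_one_left h, rho_mul, rho_mul,
    rho_simple_self, map_neg, map_neg, rho_simple] at h2
  simp [al, hab] at h2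
  simp [al] at h1
  linarith

/-! ### Lists -/

theorem forward_list [DecidableEq S] (L : List S) (hL : ∀ x ∈ L, L.count x = 2)
    (h : cs.wordProd L = 1) (a b : S) (hs : [a, b, a, b].Sublist L) : M a b = 2 := by
  have hab : a ≠ b := by
    rintro rfl
    have h1 := hs.count_le a
    rw [hL a (hs.subset (by simp))] at h1
    simp at h1
  have ha := hL a (hs.subset (by simp))
  have hb := hL b (hs.subset (by simp))
  rw [List.cons_sublist_iff] at hs
  obtain ⟨P, L1, rfl, hP, hs⟩ := hs
  rw [List.cons_sublist_iff] at hs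
  obtain ⟨Q, L2, rfl, hQ, hs⟩ := hs
  rw [List.cons_sublist_iff] at hs
  obtain ⟨R, L3, rfl, hR, hs⟩ := hs
  rw [List.singleton_sublist] at hs
  obtain ⟨P, P', rfl⟩ := List.append_of_mem hP
  obtain ⟨Q, Q', rfl⟩ := List.append_of_mem hQ
  obtain ⟨R, R', rfl⟩ := List.append_of_mem hR
  obtain ⟨T, T', rfl⟩ := List.append_of_mem hs
  have hba := hab.symm
  simp [List.count_append, hab, hba] at ha hb
  have ca : ∀ l : List S, l.count a = 0 → a ∉ l := fun l => List.count_eq_zero.mp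
  have cb : ∀ l : List S, l.count b = 0 → b ∉ l := fun l => List.count_eq_zero.mp
  refine core cs a b hab (P' ++ Q) (Q' ++ R) (R' ++ T) (T' ++ P) ?_ ?_ ?_ ?_ ?_ ?_ ?_
  any_goals (first | apply ca | apply cb); simp only [List.count_append]; omega
  simp only [CoxeterSystem.wordProd_append, CoxeterSystem.wordProd_cons] at h ⊢
  have := congrArg (fun x => (cs.wordProd P)⁻¹ * x * cs.wordProd P) h
  simpa [mul_assoc] using this

theorem exists_min_dup [DecidableEq S] (L : List S) (h : ¬ L.Nodup) :
    ∃ P s A Q, L = P ++ s :: (A ++ s :: Q) ∧ A.Nodup ∧ s ∉ A := by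
  induction L with
  | nil => simp at h
  | cons x L ih =>
    by_cases hL : L.Nodup
    · rw [List.nodup_cons] at h
      have hx : x ∈ L := by tauto
      obtain ⟨A, Q, rfl⟩ := List.append_of_mem hx
      rw [List.nodup_append] at hL
      exact ⟨[], x, A, Q, rfl, hL.1, fun hxA => hL.2.2 x hxA x (by simp) rfl⟩
    · obtain ⟨P, s, A, Q, rfl, h1, h2⟩ := ih hL
      exact ⟨x :: P, s, A, Q, rfl, h1, h2⟩

theorem comm_of_two (s u : S) (h : M s u = 2) :
    cs.simple s * cs.simple u = cs.simple u * cs.simple s := by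
  have h1 := cs.simple_mul_simple_pow s u
  rw [h, pow_two] at h1
  have := eq_inv_of_mul_eq_one_left h1
  simpa using this

theorem comm_word (s : S) (A : List S) (h : ∀ u ∈ A, M s u = 2) :
    cs.simple s * cs.wordProd A = cs.wordProd A * cs.simple s := by
  induction A with
  | nil => simp
  | cons u A ih =>
    rw [CoxeterSystem.wordProd_cons, ← mul_assoc, comm_of_two cs s u (h u (by simp)), mul_assoc,
      ih (fun v hv => h v (by simp [hv])), mul_assoc]

theorem backward_list [DecidableEq S] (n : ℕ) : ∀ (L : List S), L.length = n →
    (∀ x ∈ L, L.count x = 2) →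
    (∀ a b : S, [a, b, a, b].Sublist L → M a b = 2) → cs.wordProd L = 1 := by
  induction n using Nat.strong_induction_on with
  | _ n IH =>
  intro L hn hL hc
  by_cases hnd : L.Nodup
  · cases L with
    | nil => simp
    | cons x L =>
      have h1 := hL x (by simp)
      have h2 := List.nodup_iff_count_le_one.mp hnd x
      omega
  obtain ⟨P, s, A, Q, rfl, hA, hsA⟩ := exists_min_dup L hnd
  have hs := hL s (by simp)
  have hs' : s ∉ P ∧ s ∉ Q := by
    simp [List.count_append] at hs
    exact ⟨List.count_eq_zero.mp (by omega), List.count_eq_zero.mp (by omega)⟩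
  have hcomm : ∀ u ∈ A, M s u = 2 := by
    intro u hu
    have hus : u ≠ s := by rintro rfl; exact hsA hu
    have hus' := hus.symm
    have h1 := hL u (by simp [hu])
    have h2 := List.count_eq_one_of_mem hA hu
    simp [List.count_append, hus'] at h1
    have sA : [u].Sublist A := by simpa using hu
    by_cases hP : u ∈ P
    · have sP : [u].Sublist P := by simpa using hP
      rw [M.symmetric]
      apply hc
      have := sP.append ((sA.append ((List.nil_sublist Q).cons_cons s)).cons_cons s)
      simpa using this
    · have hQ : u ∈ Q := by
        have := List.count_eq_zero.mpr hP
        apply List.count_pos_iff.mp; omega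
      have sQ : [u].Sublist Q := by simpa using hQ
      apply hc
      have := (List.nil_sublist P).append ((sA.append (sQ.cons_cons s)).cons_cons s)
      simpa using this
  have hsub : (P ++ (A ++ Q)).Sublist (P ++ s :: (A ++ s :: Q)) :=
    (List.Sublist.refl P).append
      (((List.Sublist.refl A).append (List.sublist_cons_self s Q)).cons s)
  have key := IH (P ++ (A ++ Q)).length (by rw [← hn]; simp) (P ++ (A ++ Q)) rfl
    (by
      intro x hx
      have hxs : s ≠ x := by
        rintro rfl
        simp at hx
        tauto
      have := hL x (hsub.subset hx)
      simpa [List.count_append, hxs] using this)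
    (fun a b h => hc a b (h.trans hsub))
  rw [← key]
  simp only [CoxeterSystem.wordProd_append, CoxeterSystem.wordProd_cons]
  rw [← mul_assoc (cs.simple s), comm_word cs s A hcomm]
  simp [mul_assoc]

end PairWord

/-- Let `M` be an arbitrary Coxeter matrix on `S` with associated Coxeter system `(W, cs)`, and
let `w = (w₁, …, w_{2r})` be a word defining a pair partition `V`.  Then `w₁ ⋯ w_{2r} = 1` in
`W` if and only if `M (t_i) (t_j) = 2` for every inversion `(i, j) ∈ I(V)`; an inversion of `V`
is exactly a quadruple of indices `i < k < j < l` with `w i = w j` (the block with smaller left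
endpoint, labelled `t_i = w i`) and `w k = w l` (the other block, labelled `t_j = w k`). -/
theorem wordProd_eq_one_iff_inversions {S : Type*} (M : CoxeterMatrix S)
    {W : Type*} [Group W] (cs : CoxeterSystem M W)
    {r : ℕ} (w : Fin (2 * r) → S)
    (hpair : ∀ i, Nat.card {j : Fin (2 * r) // w j = w i} = 2) :
    cs.wordProd (List.ofFn w) = 1 ↔
      ∀ i k j l : Fin (2 * r), i < k → k < j → j < l →
        w i = w j → w k = w l → M (w i) (w k) = 2 := by
  classical
  have hL : ∀ x ∈ List.ofFn w, (List.ofFn w).count x = 2 := by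
    intro x hx
    rw [List.mem_ofFn] at hx
    obtain ⟨i, rfl⟩ := hx
    have h1 := hpair i
    rw [Nat.card_eq_fintype_card, Fintype.card_subtype] at h1
    have h2 := Multiset.count_map w (Finset.univ : Finset (Fin (2 * r))).val (b := w i)
    rw [Fin.univ_val_map, Multiset.coe_count] at h2
    refine h2.trans (Eq.trans ?_ h1)
    simp only [eq_comm (a := w i)]
    rfl
  constructor
  · intro h i k j l hik hkj hjl hij hkl
    apply PairWord.forward_list cs _ hL h
    have hsub : [i, k, j, l].Sublist (List.finRange (2 * r)) := by
      apply List.sublist_of_subperm_of_sortedLE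
      · apply List.subperm_of_subset
        · simp; omega
        · intro x _; simp
      · simp [List.sortedLE_iff_pairwise]; omega
      · exact (List.sortedLT_finRange _).sortedLE
    have := hsub.map w
    rw [← List.ofFn_eq_map] at this
    simpa [← hij, ← hkl] using this
  · intro h
    apply PairWord.backward_list cs _ _ rfl hL
    intro a b hs
    rw [List.ofFn_eq_map, List.sublist_map_iff] at hs
    obtain ⟨l', hl', he⟩ := hs
    have hp := (List.pairwise_lt_finRange (2 * r)).sublist hl'
    have hlen : l'.length = 4 := by
      have := congrArg List.length he
      simpa using this.symm
    obtain ⟨i, l', rfl⟩ := List.exists_cons_of_length_eq_add_one hlen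
    obtain ⟨k, l', rfl⟩ := List.exists_cons_of_length_eq_add_one (Nat.succ.inj hlen)
    obtain ⟨j, l', rfl⟩ := List.exists_cons_of_length_eq_add_one
      (Nat.succ.inj (Nat.succ.inj hlen))
    obtain ⟨l, l', rfl⟩ := List.exists_cons_of_length_eq_add_one
      (Nat.succ.inj (Nat.succ.inj (Nat.succ.inj hlen)))
    simp at he hp
    obtain ⟨rfl, rfl, h3, h4, -⟩ := he
    exact h i k j l (by omega) (by omega) (by omega) h3 h4
end

section
/- Let M be a Coxeter matrix on a countable type S with M s t = 0 or M s t ≥ 4 for all s ≠ t (extra-large type, 0 encoding ∞), let A be the associated Artin group with generators a : S → A, and let (a_{i_1}^{ε_1}, …, a_{i_k}^{ε_k}) be a word in the generators and their inverses (ε_j ∈ {+1, −1}) whose associated partition of {1, …, k} is a pair partition V. If a_{i_1}^{ε_1} · … · a_{i_k}^{ε_k} = 1 in A, then V is non-crossing. -/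
open Filter Topology

/-- The alternating word `s·t·s·t·⋯` with `m` factors (starting with `s`), as an element of the
free group on `S`. -/
def artinAltWord {S : Type*} (s t : S) (m : ℕ) : FreeGroup S :=
  (List.ofFn fun j : Fin m => FreeGroup.of (if (j : ℕ) % 2 = 0 then s else t)).prod

/-- The Artin relators associated to a Coxeter matrix `M` : for each pair `s ≠ t` with
`2 ≤ M s t` (finite), the relator `alt(s, t, M s t) · alt(t, s, M s t)⁻¹` expressing
`s·t·s·⋯ = t·s·t·⋯` (both sides with `M s t` factors). -/
def artinRelators {S : Type*} (M : CoxeterMatrix S) : Set (FreeGroup S) :=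
  {x | ∃ s t : S, s ≠ t ∧ 2 ≤ M s t ∧
    x = artinAltWord s t (M s t) * (artinAltWord t s (M s t))⁻¹}

/-- The Artin group associated to a Coxeter matrix `M`. -/
abbrev ArtinGroup {S : Type*} (M : CoxeterMatrix S) : Type _ :=
  PresentedGroup (artinRelators M)

/-- The generators of the Artin group associated to `M`. -/
def artinGen {S : Type*} (M : CoxeterMatrix S) (s : S) : ArtinGroup M :=
  PresentedGroup.of s


section Exchange
variable {B W : Type*} [Group W] {M : CoxeterMatrix B} (cs : CoxeterSystem M W)

open Classical in
/-- The action of a simple reflection on pairs (element, sign). -/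
noncomputable def anExchAct (i : B) : Function.End (W × ZMod 2) :=
  fun x => (cs.simple i * x.1 * cs.simple i, x.2 + if x.1 = cs.simple i then 1 else 0)

lemma an_dihedral_aux {G : Type*} [Group G] {a b : G} (haa : a * a = 1) (hbb : b * b = 1)
    (n : ℕ) : ((a * b) ^ n)⁻¹ * b = b * (a * b) ^ n := by
  have hi : a⁻¹ = a := inv_eq_of_mul_eq_one_left haa
  have hj : b⁻¹ = b := inv_eq_of_mul_eq_one_left hbb
  induction n with
  | zero => simp
  | succ n ih =>
    rw [pow_succ, mul_inv_rev, mul_assoc, ih, ← pow_succ, pow_succ', mul_inv_rev, hi, hj]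
    simp only [mul_assoc]

lemma an_dihedral_e1 {G : Type*} [Group G] {a b : G} (haa : a * a = 1) (hbb : b * b = 1)
    (n : ℕ) (t : G) :
    ((a * b) ^ n * t * ((a * b) ^ n)⁻¹ = b) ↔ t = b * (a * b) ^ (2 * n) := by
  rw [two_mul, pow_add, ← mul_assoc, ← an_dihedral_aux haa hbb]
  generalize (a * b) ^ n = p
  constructor
  · rintro rfl; group
  · rintro rfl; group

lemma an_dihedral_e2 {G : Type*} [Group G] {a b : G} (haa : a * a = 1) (hbb : b * b = 1)
    (n : ℕ) (t : G) :
    (b * ((a * b) ^ n * t * ((a * b) ^ n)⁻¹) * b = a) ↔ t = b * (a * b) ^ (2 * n + 1) := by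
  have hj : b⁻¹ = b := inv_eq_of_mul_eq_one_left hbb
  have : b * (a * b) ^ (2 * n + 1) = ((a * b) ^ n)⁻¹ * (b⁻¹ * a * b⁻¹) * (a * b) ^ n := by
    rw [hj, mul_assoc b a b, ← mul_assoc, an_dihedral_aux haa hbb,
      show 2 * n + 1 = n + 1 + n by ring, pow_add, pow_succ]
    simp only [mul_assoc]
  rw [this]
  generalize (a * b) ^ n = p
  constructor
  · rintro rfl; group
  · rintro rfl; group

lemma anExchAct_apply (i : B) (t : W) (z z' : ZMod 2)
    (h : (t = cs.simple i ∧ z' = z + 1) ∨ (t ≠ cs.simple i ∧ z' = z)) :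
    anExchAct cs i (t, z) = (cs.simple i * t * cs.simple i, z') := by
  rcases h with ⟨h, rfl⟩ | ⟨h, rfl⟩ <;> simp [anExchAct, h]

open Classical in
lemma anExchAct_pow (i j : B) (n : ℕ) (t : W) (z : ZMod 2) :
    ((anExchAct cs i * anExchAct cs j) ^ n) (t, z) =
      ((cs.simple i * cs.simple j) ^ n * t * ((cs.simple i * cs.simple j) ^ n)⁻¹,
        z + ∑ l ∈ Finset.range (2 * n),
          if t = cs.simple j * (cs.simple i * cs.simple j) ^ l then 1 else 0) := by
  induction n with
  | zero => simp [Function.End.one_def]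
  | succ n ih =>
    rw [pow_succ']
    change (anExchAct cs i * anExchAct cs j) (((anExchAct cs i * anExchAct cs j) ^ n) (t, z)) = _
    rw [ih]
    change anExchAct cs i (anExchAct cs j _) = _
    have haa := cs.simple_mul_simple_self i
    have hbb := cs.simple_mul_simple_self j
    have e1 := an_dihedral_e1 haa hbb n t
    have e2 := an_dihedral_e2 haa hbb n t
    rw [show 2 * (n + 1) = 2 * n + 1 + 1 by ring, Finset.sum_range_succ, Finset.sum_range_succ]
    rw [anExchAct_apply cs j _ _ _ (z' := z + ∑ l ∈ Finset.range (2 * n),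
          (if t = cs.simple j * (cs.simple i * cs.simple j) ^ l then 1 else 0) +
          if t = cs.simple j * (cs.simple i * cs.simple j) ^ (2 * n) then 1 else 0),
      anExchAct_apply cs i _ _ _ (z' := z + ∑ l ∈ Finset.range (2 * n),
          (if t = cs.simple j * (cs.simple i * cs.simple j) ^ l then 1 else 0) +
          (if t = cs.simple j * (cs.simple i * cs.simple j) ^ (2 * n) then 1 else 0) +
          if t = cs.simple j * (cs.simple i * cs.simple j) ^ (2 * n + 1) then 1 else 0)]
    · rw [Prod.mk.injEq]
      constructor
      · rw [pow_succ']
        simp only [mul_inv_rev, cs.inv_simple, mul_assoc]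
      · ring
    · rw [e2]; split_ifs with h1 h2 <;> simp_all
    · rw [e1]; split_ifs with h1 <;> simp_all

lemma anExchAct_liftable : M.IsLiftable (anExchAct cs) := by
  classical
  intro i j
  funext ⟨t, z⟩
  rw [anExchAct_pow, cs.simple_mul_simple_pow, two_mul, Finset.sum_range_add]
  simp only [pow_add, cs.simple_mul_simple_pow, one_mul]
  rw [CharTwo.add_self_eq_zero]
  simp [Function.End.one_def]

noncomputable def anExchHom : W →* Function.End (W × ZMod 2) :=
  cs.lift ⟨anExchAct cs, anExchAct_liftable cs⟩

open Classical in
lemma anExchHom_word (ω : List B) (t : W) :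
    anExchHom cs (cs.wordProd ω) (t, 0) =
      (cs.wordProd ω * t * (cs.wordProd ω)⁻¹, (((cs.rightInvSeq ω).count t : ℕ) : ZMod 2)) := by
  induction ω with
  | nil => simp [Function.End.one_def]
  | cons i ω ih =>
    rw [cs.wordProd_cons, map_mul]
    change anExchHom cs (cs.simple i) (anExchHom cs (cs.wordProd ω) (t, 0)) = _
    rw [ih]
    have : anExchHom cs (cs.simple i) = anExchAct cs i := cs.lift_apply_simple _ i
    rw [this]
    simp only [anExchAct, CoxeterSystem.rightInvSeq, List.count_cons]
    rw [Prod.mk.injEq]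
    constructor
    · simp [mul_assoc]
    · push_cast
      congr 1
      have : (cs.wordProd ω * t * (cs.wordProd ω)⁻¹ = cs.simple i) ↔
        ((cs.wordProd ω)⁻¹ * cs.simple i * cs.wordProd ω = t) := by
        constructor
        · intro h; rw [← h]; group
        · intro h; rw [← h]; group
      simp [this]

lemma an_mem_rightInvSeq {ω : List B} {i : B} (h : cs.IsRightDescent (cs.wordProd ω) i) :
    cs.simple i ∈ cs.rightInvSeq ω := by
  classical
  obtain ⟨ω', hr, hw⟩ := cs.exists_isReduced (cs.wordProd ω * cs.simple i)
  have hprod : cs.wordProd (ω'.concat i) = cs.wordProd ω := by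
    rw [cs.wordProd_concat, ← hw]; simp
  have hred : cs.IsReduced (ω'.concat i) := by
    rw [CoxeterSystem.IsReduced, hprod, List.length_concat]
    have := (cs.isRightDescent_iff).1 h
    rw [hw, hr.eq] at this
    exact this.symm
  have h1 := anExchHom_word cs ω (cs.simple i)
  rw [← hprod, anExchHom_word cs (ω'.concat i)] at h1
  have h2 := congrArg Prod.snd h1
  simp only at h2
  rw [List.count_eq_one_of_mem (CoxeterSystem.IsReduced.nodup_rightInvSeq cs hred)
    (by rw [cs.rightInvSeq_concat]; simp)] at h2
  by_contra hn
  rw [List.count_eq_zero_of_not_mem hn] at h2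
  simp at h2

lemma an_exchange {ω : List B} {i : B} (h : cs.IsLeftDescent (cs.wordProd ω) i) :
    ∃ j < ω.length, cs.simple i * cs.wordProd ω = cs.wordProd (ω.eraseIdx j) := by
  have h1 : cs.IsRightDescent (cs.wordProd ω.reverse) i := by
    rw [cs.wordProd_reverse, cs.isRightDescent_inv_iff]; exact h
  have h2 := an_mem_rightInvSeq cs h1
  rw [cs.rightInvSeq_reverse, List.mem_reverse] at h2
  obtain ⟨j, hj, hji⟩ := List.mem_iff_getElem.mp h2
  refine ⟨j, by simpa using hj, ?_⟩
  rw [← cs.getD_leftInvSeq_mul_wordProd, List.getD_eq_getElem _ _ hj, hji]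

end Exchange

section Words
variable {B W : Type*} [Group W] {M : CoxeterMatrix B} (cs : CoxeterSystem M W)

/-- Words related by braid moves of length four. -/
inductive AnRel : List B → List B → Prop
  | refl (ω) : AnRel ω ω
  | swap (s t : B) (z : List B) (hst : s ≠ t)
      (h : cs.wordProd [s, t, s, t] = cs.wordProd [t, s, t, s]) :
      AnRel (s :: t :: s :: t :: z) (t :: s :: t :: s :: z)
  | cons (x : B) {ω ω' : List B} : AnRel ω ω' → AnRel (x :: ω) (x :: ω')
  | trans {ω ω' ω'' : List B} : AnRel ω ω' → AnRel ω' ω'' → AnRel ω ω''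

variable {cs}

lemma AnRel.wordProd_eq {ω ω' : List B} (h : AnRel cs ω ω') :
    cs.wordProd ω = cs.wordProd ω' := by
  induction h with
  | refl => rfl
  | swap s t z hst h =>
    have := congrArg (· * cs.wordProd z) h
    simpa [← cs.wordProd_append] using this
  | cons x _ ih => rw [cs.wordProd_cons, cs.wordProd_cons, ih]
  | trans _ _ ih1 ih2 => rw [ih1, ih2]

lemma AnRel.perm {ω ω' : List B} (h : AnRel cs ω ω') : ω.Perm ω' := by
  classical
  induction h with
  | refl => exact List.Perm.refl _
  | swap s t z hst h =>
    rw [List.perm_iff_count]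
    intro a
    simp only [List.count_cons]
    omega
  | cons x _ ih => exact ih.cons x
  | trans _ _ ih1 ih2 => exact ih1.trans ih2

/-- The two crossing patterns. -/
def AnCross (a b : B) (l : List B) : Prop := l = [a, b, a, b] ∨ l = [b, a, b, a]

open Classical in
lemma AnRel.filter_eq {a b : B} (hab : a ≠ b) {ω ω' : List B} (h : AnRel cs ω ω')
    (hc : ∀ x, ω.count x ≤ 2) :
    ω.filter (fun x => x = a ∨ x = b) = ω'.filter (fun x => x = a ∨ x = b) ∨
    (AnCross a b (ω.filter (fun x => x = a ∨ x = b)) ∧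
      AnCross a b (ω'.filter (fun x => x = a ∨ x = b))) := by
  induction h with
  | refl => left; rfl
  | swap s t z hst h =>
    have hz : ∀ x, x = s ∨ x = t → x ∉ z := by
      intro x hx hxz
      have h1 := hc x
      have h2 : 0 < z.count x := List.count_pos_iff.2 hxz
      rcases hx with rfl | rfl
      · simp [List.count_cons] at h1; split_ifs at h1 <;> omega
      · simp [List.count_cons] at h1; split_ifs at h1 <;> omega
    by_cases hs : s = a ∨ s = b
    · by_cases ht : t = a ∨ t = b
      · right
        have hzf : z.filter (fun x => x = a ∨ x = b) = [] := by
          rw [List.filter_eq_nil_iff]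
          intro x hx
          have := hz x
          grind
        simp only [List.filter_cons, hs, ht, hzf, decide_true, if_true, AnCross]
        grind
      · left; simp [hs, ht]
    · left; simp [List.filter_cons, hs]
  | @cons x ω ω' hr ih =>
    have hc' : ∀ y, ω.count y ≤ 2 := fun y =>
      le_trans (List.count_le_count_cons) (hc y)
    by_cases hx : x = a ∨ x = b
    · rcases ih hc' with h | ⟨h, -⟩
      · left; rw [List.filter_cons, List.filter_cons, h]
      · exfalso
        have h1 := hc x
        rw [List.count_cons_self] at h1
        have h2 : (ω.filter (fun x => x = a ∨ x = b)).count x = ω.count x :=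
          List.count_filter (by simpa using hx)
        rcases h with h | h <;> rw [h] at h2 <;> rcases hx with rfl | rfl <;>
          simp [List.count_cons, hab, hab.symm] at h2 <;> omega
    · have e : ∀ l : List B, (x :: l).filter (fun x => decide (x = a ∨ x = b)) =
          l.filter (fun x => decide (x = a ∨ x = b)) := fun l => by
        rw [List.filter_cons, if_neg (by simpa using hx)]
      rw [e, e]
      exact ih hc'
  | trans h1 h2 ih1 ih2 =>
    have hc' : ∀ y, List.count y _ ≤ 2 := fun y => (h1.perm.count_eq y) ▸ (hc y)
    rcases ih1 hc with e1 | ⟨e1, e1'⟩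
    · rw [e1]; exact ih2 hc'
    · rcases ih2 hc' with e2 | ⟨e2, e2'⟩
      · right; exact ⟨e1, e2 ▸ e1'⟩
      · right; exact ⟨e1, e2'⟩

lemma an_tail_reduced {x : B} {ω : List B} (h : cs.IsReduced (x :: ω)) : cs.IsReduced ω := by
  simpa using h.drop 1

lemma an_leftDescent {x : B} {ω : List B} (h : cs.IsReduced (x :: ω)) :
    cs.IsLeftDescent (cs.wordProd (x :: ω)) x := by
  rw [CoxeterSystem.IsLeftDescent, h.eq, cs.wordProd_cons, cs.simple_mul_simple_cancel_left,
    (an_tail_reduced h).eq]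
  simp

lemma an_ext {t : B} (p z : List B) (hr : cs.IsReduced (p ++ z))
    (hd : cs.IsLeftDescent (cs.wordProd (p ++ z)) t) :
    (∃ z', cs.IsReduced (t :: (p ++ z')) ∧
      cs.wordProd (t :: (p ++ z')) = cs.wordProd (p ++ z)) ∨
    ∃ j < p.length, cs.wordProd (t :: p) = cs.wordProd (p.eraseIdx j) := by
  obtain ⟨j, hj, he⟩ := an_exchange cs hd
  by_cases hjp : j < p.length
  · right
    refine ⟨j, hjp, ?_⟩
    rw [List.eraseIdx_append_of_lt_length hjp, cs.wordProd_append, cs.wordProd_append,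
      ← mul_assoc] at he
    rw [cs.wordProd_cons]
    exact mul_right_cancel he
  · left
    push Not at hjp
    rw [List.eraseIdx_append_of_length_le hjp] at he
    have hw : cs.wordProd (t :: (p ++ z.eraseIdx (j - p.length))) = cs.wordProd (p ++ z) := by
      rw [cs.wordProd_cons, ← he, cs.simple_mul_simple_cancel_left]
    refine ⟨_, ?_, hw⟩
    rw [CoxeterSystem.IsReduced, hw, hr.eq]
    rw [List.length_append] at hj
    simp only [List.length_cons, List.length_append, List.length_eraseIdx]
    split_ifs <;> omega

/-- Small orders are excluded. -/
def AnLarge (cs : CoxeterSystem M W) : Prop :=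
  ∀ s t : B, s ≠ t → (cs.simple s * cs.simple t) ^ 2 ≠ 1 ∧ (cs.simple s * cs.simple t) ^ 3 ≠ 1

lemma an_dih_one {G : Type*} [Group G] {a b : G} (haa : a * a = 1) (h : b * a = 1) :
    (a * b) ^ 2 = 1 := by
  have : b = a := by
    have := congrArg (· * a) h
    simpa [mul_assoc, haa] using this
  rw [this, haa, one_pow]

lemma an_dih_two {G : Type*} [Group G] {a b : G} (haa : a * a = 1) (hbb : b * b = 1)
    (h : a * (b * a) = a ∨ a * (b * a) = b) : (a * b) ^ 2 = 1 := by
  rcases h with h | h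
  · exact an_dih_one haa (by simpa using h)
  · have := congrArg (· * b) h
    simpa [pow_two, mul_assoc, hbb] using this

lemma an_dih_three {G : Type*} [Group G] {a b : G} (haa : a * a = 1) (hbb : b * b = 1)
    (h : b * (a * (b * a)) = b * a ∨ b * (a * (b * a)) = 1 ∨ b * (a * (b * a)) = a * b) :
    (a * b) ^ 2 = 1 ∨ (a * b) ^ 3 = 1 := by
  rcases h with h | h | h
  · exact Or.inl (an_dih_one haa (by simpa using h))
  · left
    have := congrArg (a * · * a) h
    simpa [pow_two, mul_assoc, haa] using this
  · right
    have := congrArg (a * · * b) h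
    simp only [mul_assoc, hbb, mul_one, haa] at this
    simpa [pow_succ, mul_assoc] using this

lemma an_dih_four {G : Type*} [Group G] {a b : G} (haa : a * a = 1) (hbb : b * b = 1)
    (h2 : (a * b) ^ 2 ≠ 1) (h3 : (a * b) ^ 3 ≠ 1)
    (h : a * (b * (a * (b * a))) = a * (b * a) ∨ a * (b * (a * (b * a))) = a ∨
      a * (b * (a * (b * a))) = b ∨ a * (b * (a * (b * a))) = b * (a * b)) :
    a * (b * (a * b)) = b * (a * (b * a)) := by
  rcases h with h | h | h | h
  · exact absurd (an_dih_one haa (by simpa using h)) h2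
  · have h' : b * (a * (b * a)) = 1 := by simpa using h
    rcases an_dih_three haa hbb (Or.inr (Or.inl h')) with h | h
    · exact absurd h h2
    · exact absurd h h3
  · have := congrArg (· * b) h
    exact absurd (by simpa [pow_succ, mul_assoc, hbb] using this) h3
  · have := congrArg (· * a) h
    simpa [mul_assoc, haa] using this

open Classical in
lemma an_matsumoto (hL : AnLarge cs) (n : ℕ) : ∀ ω ω' : List B, ω.length = n →
    (∀ x, ω.count x ≤ 2) → cs.IsReduced ω → cs.IsReduced ω' →
    cs.wordProd ω = cs.wordProd ω' → AnRel cs ω ω' := by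
  induction n with
  | zero =>
    intro ω ω' hlen hc hr hr' he
    have : ω'.length = 0 := by rw [← hr'.eq, ← he, hr.eq, hlen]
    rw [List.length_eq_zero_iff] at this hlen
    subst this hlen
    exact AnRel.refl _
  | succ n IH =>
    intro ω ω' hlen hc hr hr' he
    have hlen' : ω'.length = n + 1 := by rw [← hr'.eq, ← he, hr.eq, hlen]
    -- words with the same first letter
    have same : ∀ (s : B) (x y : List B), (s :: x).length = n + 1 →
        (∀ a, (s :: x).count a ≤ 2) → cs.IsReduced (s :: x) → cs.IsReduced (s :: y) →
        cs.wordProd (s :: x) = cs.wordProd (s :: y) → AnRel cs (s :: x) (s :: y) := by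
      intro s x y hl hcx h1 h2 h3
      refine AnRel.cons s (IH x y (by simpa using hl)
        (fun a => le_trans List.count_le_count_cons (hcx a))
        (an_tail_reduced h1) (an_tail_reduced h2) ?_)
      rw [cs.wordProd_cons, cs.wordProd_cons] at h3
      exact mul_left_cancel h3
    match ω, ω', hlen, hlen' with
    | s :: x, t :: y, hlen, hlen' =>
    by_cases hst : s = t
    · subst hst
      exact same s x y hlen hc hr hr' he
    obtain ⟨h2, h3⟩ := hL s t hst
    have hss := cs.simple_mul_simple_self s
    have htt := cs.simple_mul_simple_self t
    have hds := an_leftDescent hr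
    have hdt := an_leftDescent hr'
    rw [← he] at hdt
    set w := cs.wordProd (s :: x) with hw
    obtain ⟨z1, hz1, hw1⟩ | ⟨j, hj, hj'⟩ := an_ext (t := t) [s] x hr hdt
    swap
    · exfalso
      have : j = 0 := by simpa using hj
      subst this
      exact h2 (an_dih_one hss (by simpa [cs.wordProd_cons] using hj'))
    rw [← List.cons_append] at hz1 hw1
    have hd1 := hds
    rw [hw, ← List.singleton_append, ← hw1] at hd1
    obtain ⟨z2, hz2, hw2⟩ | ⟨j, hj, hj'⟩ := an_ext (t := s) [t, s] z1 hz1 hd1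
    swap
    · exfalso
      refine h2 (an_dih_two hss htt ?_)
      have : j = 0 ∨ j = 1 := by simp at hj; omega
      rcases this with rfl | rfl <;>
        simp only [cs.wordProd_cons, List.eraseIdx, cs.wordProd_nil, mul_one] at hj'
      · exact Or.inl hj'
      · exact Or.inr hj'
    rw [← List.cons_append] at hz2 hw2
    have hd2 := hdt
    rw [hw, ← List.singleton_append, ← hw1, ← hw2] at hd2
    obtain ⟨z3, hz3, hw3⟩ | ⟨j, hj, hj'⟩ := an_ext (t := t) [s, t, s] z2 hz2 hd2
    swap
    · exfalso
      refine (an_dih_three hss htt ?_).elim h2 h3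
      have : j = 0 ∨ j = 1 ∨ j = 2 := by simp at hj; omega
      rcases this with rfl | rfl | rfl <;>
        simp only [cs.wordProd_cons, List.eraseIdx, cs.wordProd_nil, mul_one, hss] at hj'
      · exact Or.inl hj'
      · exact Or.inr (Or.inl hj')
      · exact Or.inr (Or.inr hj')
    rw [← List.cons_append] at hz3 hw3
    have hd3 := hds
    rw [hw, ← List.singleton_append, ← hw1, ← hw2, ← hw3] at hd3
    have hw3' : cs.wordProd (t :: s :: t :: s :: z3) = w := by
      rw [hw2, hw1] at hw3; exact hw3
    obtain ⟨z4, hz4, hw4⟩ | ⟨j, hj, hj'⟩ := an_ext (t := s) [t, s, t, s] z3 hz3 hd3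
    · exfalso
      have := (same s x _ hlen hc hr hz4 (by rw [hw4]; exact hw3'.symm)).perm.count_eq s
      have h5 := hc s
      rw [this] at h5
      simp [List.count_cons] at h5
      split_ifs at h5 <;> omega
    have h4 : cs.wordProd [s, t, s, t] = cs.wordProd [t, s, t, s] := by
      simp only [cs.wordProd_cons, cs.wordProd_nil, mul_one]
      refine an_dih_four hss htt h2 h3 ?_
      have : j = 0 ∨ j = 1 ∨ j = 2 ∨ j = 3 := by simp at hj; omega
      rcases this with rfl | rfl | rfl | rfl <;>
        simp only [cs.wordProd_cons, List.eraseIdx, cs.wordProd_nil, mul_one, hss,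
          cs.simple_mul_simple_cancel_left] at hj'
      · exact Or.inl hj'
      · exact Or.inr (Or.inl hj')
      · exact Or.inr (Or.inr (Or.inl hj'))
      · exact Or.inr (Or.inr (Or.inr hj'))
    have hwst : cs.wordProd (s :: t :: s :: t :: z3) = w := by
      rw [← hw3']
      have := congrArg (· * cs.wordProd z3) h4
      simpa [← cs.wordProd_append] using this
    have hz3' : cs.IsReduced (s :: t :: s :: t :: z3) := by
      rw [CoxeterSystem.IsReduced, hwst, ← hw3']
      exact hz3
    have r1 := same s x _ hlen hc hr hz3' hwst.symm
    have r2 := r1.trans (AnRel.swap s t z3 hst h4)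
    refine r2.trans (same t _ y ?_ ?_ hz3 hr' ?_)
    · rw [← r2.perm.length_eq, hlen]
    · intro a; rw [← r2.perm.count_eq]; exact hc a
    · rw [hw3', he]

open Classical in
lemma an_nonreduced (hL : AnLarge cs) (ω : List B) (hc : ∀ x, ω.count x ≤ 2)
    (hn : ¬ cs.IsReduced ω) : ∃ u x v, AnRel cs ω (u ++ x :: x :: v) := by
  induction ω with
  | nil => exact absurd (by simp [CoxeterSystem.IsReduced]) hn
  | cons i ω ih =>
    have hc' : ∀ y, ω.count y ≤ 2 := fun y => le_trans (List.count_le_count_cons) (hc y)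
    by_cases hr : cs.IsReduced ω
    · have hd : cs.IsLeftDescent (cs.wordProd ω) i := by
        by_contra h
        rw [cs.not_isLeftDescent_iff, ← cs.wordProd_cons, hr.eq] at h
        exact hn (by simpa [CoxeterSystem.IsReduced] using h)
      obtain ⟨ω', hr', hw'⟩ := cs.exists_isReduced (cs.simple i * cs.wordProd ω)
      have hp : cs.wordProd ω = cs.wordProd (i :: ω') := by
        rw [cs.wordProd_cons, ← hw', cs.simple_mul_simple_cancel_left]
      have hr2 : cs.IsReduced (i :: ω') := by
        rw [CoxeterSystem.IsReduced, ← hp, List.length_cons, ← hr'.eq, ← hw']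
        exact ((cs.isLeftDescent_iff).1 hd).symm
      exact ⟨[], i, ω', (an_matsumoto hL _ ω _ rfl hc' hr hr2 hp).cons i⟩
    · obtain ⟨u, x, v, h⟩ := ih hc' hr
      exact ⟨i :: u, x, v, h.cons i⟩

open Classical in
lemma an_main (hL : AnLarge cs) {a b : B} (hab : a ≠ b) (n : ℕ) : ∀ ω : List B, ω.length ≤ n →
    (∀ x, ω.count x ≤ 2) → cs.wordProd ω = 1 →
    ¬ AnCross a b (ω.filter (fun x => x = a ∨ x = b)) := by
  induction n with
  | zero =>
    intro ω hlen hc hw hX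
    have : ω = [] := List.length_eq_zero_iff.1 (by omega)
    subst this
    simp [AnCross] at hX
  | succ n IH =>
    intro ω hlen hc hw hX
    have hn : ¬ cs.IsReduced ω := by
      intro h
      have := h.eq
      rw [hw, cs.length_one] at this
      have : ω = [] := List.length_eq_zero_iff.1 this.symm
      subst this
      simp [AnCross] at hX
    obtain ⟨u, x, v, h⟩ := an_nonreduced hL ω hc hn
    have hX' : AnCross a b ((u ++ x :: x :: v).filter (fun x => x = a ∨ x = b)) := by
      rcases h.filter_eq hab hc with h | h
      · rwa [← h]
      · exact h.2
    have hlen' := h.perm.length_eq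
    refine IH (u ++ v) ?_ ?_ ?_ ?_
    · simp at hlen' ⊢; omega
    · intro y
      have h1 := hc y
      rw [h.perm.count_eq] at h1
      simp [List.count_cons] at h1 ⊢
      omega
    · rw [← hw, h.wordProd_eq]
      simp [cs.wordProd_append, cs.wordProd_cons]
    · rw [List.filter_append] at hX' ⊢
      by_cases hx : x = a ∨ x = b
      · exfalso
        have hch : List.IsChain (· ≠ ·) (u.filter (fun x => decide (x = a ∨ x = b)) ++
            (x :: x :: v).filter (fun x => decide (x = a ∨ x = b))) := by
          rcases hX' with h | h <;> rw [h] <;> simp [hab, hab.symm]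
        have := hch.right_of_append
        simp [List.filter_cons, hx] at this
      · simpa [List.filter_cons, hx] using hX'

end Words

section Geometric
variable {B : Type*} (M : CoxeterMatrix B)

open Polynomial Polynomial.Chebyshev Module

open Classical in
/-- Twice the Gram matrix of the geometric representation. -/
noncomputable def anGram (s t : B) : ℝ := if s = t then 2 else -2 * Real.cos (Real.pi / M s t)

noncomputable def anForm (s : B) : Dual ℝ (B →₀ ℝ) := Finsupp.linearCombination ℝ (anGram M s)

lemma anForm_single (s t : B) : anForm M s (Finsupp.single t 1) = anGram M s t := by
  simp [anForm]

lemma anForm_self (s : B) : anForm M s (Finsupp.single s 1) = 2 := by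
  simp [anForm, anGram]

noncomputable def anRefl (s : B) : (B →₀ ℝ) ≃ₗ[ℝ] (B →₀ ℝ) := reflection (anForm_self M s)

lemma an_S_zero (m : ℕ) (hm : 3 ≤ m) (n : ℤ) (h : 2 * (n + 1) = m) :
    (S ℝ n).eval (2 * Real.cos (2 * Real.pi / m)) = 0 := by
  have hm' : (0:ℝ) < m := by positivity
  have hsin : Real.sin (2 * Real.pi / m) ≠ 0 := by
    apply ne_of_gt
    apply Real.sin_pos_of_pos_of_lt_pi
    · positivity
    · rw [div_lt_iff₀ hm']
      have : (3:ℝ) ≤ m := by exact_mod_cast hm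
      nlinarith [Real.pi_pos]
  have h1 := S_two_mul_real_cos (2 * Real.pi / m) n
  have h2 : ((n:ℝ) + 1) * (2 * Real.pi / m) = Real.pi := by
    have : 2 * ((n:ℝ) + 1) = m := by exact_mod_cast h
    field_simp
    linarith
  rw [h2, Real.sin_pi] at h1
  exact (mul_eq_zero.1 h1).resolve_right hsin

lemma an_S_add_zero (m : ℕ) (hm : 3 ≤ m) (n : ℤ) (h : 2 * n + 1 = m) :
    (S ℝ n).eval (2 * Real.cos (2 * Real.pi / m)) +
      (S ℝ (n - 1)).eval (2 * Real.cos (2 * Real.pi / m)) = 0 := by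
  have hm' : (0:ℝ) < m := by positivity
  have hsin : Real.sin (2 * Real.pi / m) ≠ 0 := by
    apply ne_of_gt
    apply Real.sin_pos_of_pos_of_lt_pi
    · positivity
    · rw [div_lt_iff₀ hm']
      have : (3:ℝ) ≤ m := by exact_mod_cast hm
      nlinarith [Real.pi_pos]
  have h1 := S_two_mul_real_cos (2 * Real.pi / m) n
  have h1' := S_two_mul_real_cos (2 * Real.pi / m) (n - 1)
  have h2 : ((n:ℝ) + 1) * (2 * Real.pi / m) = 2 * Real.pi - ((((n - 1 : ℤ) : ℝ)) + 1) * (2 * Real.pi / m) := by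
    have : 2 * (n:ℝ) + 1 = m := by exact_mod_cast h
    push_cast
    field_simp
    linarith
  rw [h2, Real.sin_two_pi_sub] at h1
  have : ((S ℝ n).eval (2 * Real.cos (2 * Real.pi / m)) +
      (S ℝ (n - 1)).eval (2 * Real.cos (2 * Real.pi / m))) * Real.sin (2 * Real.pi / m) = 0 := by
    rw [add_mul, h1, h1']; ring
  exact (mul_eq_zero.1 this).resolve_right hsin

lemma anRefl_liftable (hM : ∀ s t : B, s ≠ t → M s t = 0 ∨ 4 ≤ M s t) :
    M.IsLiftable (anRefl M) := by
  intro s t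
  by_cases hst : s = t
  · subst hst
    rw [M.diagonal, pow_one]
    ext1 v
    exact Module.involutive_reflection (anForm_self M s) v
  rcases hM s t hst with h0 | h4
  · rw [h0, pow_zero]
  set m := M s t with hm
  apply LinearEquiv.toLinearMap_injective
  have hcos : 2 * Real.cos (2 * Real.pi / m) =
      anForm M s (Finsupp.single t 1) * anForm M t (Finsupp.single s 1) - 2 := by
    rw [anForm_single, anForm_single, anGram, anGram, if_neg hst, if_neg (Ne.symm hst),
      M.symmetric t s, ← hm, mul_div_assoc, Real.cos_two_mul]
    ring
  rw [anRefl, anRefl, reflection_mul_reflection_pow _ _ m _ hcos]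
  rcases Nat.even_or_odd' m with ⟨p, hp | hp⟩
  · have e1 : ((m:ℤ) - 2) / 2 = p - 1 := by omega
    have e2 : ((m:ℤ) - 1) / 2 = p - 1 := by omega
    rw [e1, e2, an_S_zero m (by omega) (p - 1) (by omega)]
    simp
  · have e1 : ((m:ℤ) - 2) / 2 = p - 1 := by omega
    have e2 : ((m:ℤ) - 1) / 2 = p := by omega
    have e3 : ((m:ℤ) - 3) / 2 = p - 1 := by omega
    have e4 : (m:ℤ) / 2 = p := by omega
    rw [e1, e2, e3, e4, an_S_add_zero m (by omega) p (by omega)]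
    simp

lemma an_cos_sq (hM : ∀ s t : B, s ≠ t → M s t = 0 ∨ 4 ≤ M s t)
    {s t : B} (hst : s ≠ t) :
    anGram M s t = anGram M t s ∧ anGram M s t ≠ 0 ∧ 2 ≤ anGram M s t ^ 2 := by
  have hcos : Real.sqrt 2 / 2 ≤ Real.cos (Real.pi / M s t) := by
    rw [← Real.cos_pi_div_four]
    rcases hM s t hst with h | h
    · rw [h, Nat.cast_zero, div_zero, Real.cos_zero]; exact Real.cos_le_one _
    · apply Real.cos_le_cos_of_nonneg_of_le_pi
      · positivity
      · linarith [Real.pi_pos]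
      · have : (4:ℝ) ≤ M s t := by exact_mod_cast h
        gcongr
  have h2 : (0:ℝ) < Real.sqrt 2 := by positivity
  have h3 : Real.sqrt 2 ^ 2 = 2 := Real.sq_sqrt (by norm_num)
  rw [anGram, anGram, if_neg hst, if_neg (Ne.symm hst), M.symmetric t s]
  refine ⟨rfl, ?_, ?_⟩ <;> nlinarith

lemma an_large (hM : ∀ s t : B, s ≠ t → M s t = 0 ∨ 4 ≤ M s t) :
    AnLarge M.toCoxeterSystem := by
  intro s t hst
  let cs := M.toCoxeterSystem
  let φ := cs.lift ⟨anRefl M, anRefl_liftable M hM⟩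
  have hφ : ∀ i, φ (cs.simple i) = anRefl M i := fun i => cs.lift_apply_simple _ i
  obtain ⟨hsym, hne, hsq⟩ := an_cos_sq M hM hst
  set c := anGram M s t with hc
  have hs : ∀ x y : ℝ, anRefl M s (x • Finsupp.single s 1 + y • Finsupp.single t 1) =
      (-x - c * y) • Finsupp.single s 1 + y • Finsupp.single t 1 := by
    intro x y
    rw [anRefl, reflection_apply, map_add, map_smul, map_smul, anForm_self, anForm_single, ← hc]
    simp only [smul_eq_mul]
    module
  have ht : ∀ x y : ℝ, anRefl M t (x • Finsupp.single s 1 + y • Finsupp.single t 1) =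
      x • Finsupp.single s 1 + (-y - c * x) • Finsupp.single t 1 := by
    intro x y
    rw [anRefl, reflection_apply, map_add, map_smul, map_smul, anForm_self, anForm_single, ← hsym]
    simp only [smul_eq_mul]
    module
  have key : ∀ n : ℕ, (cs.simple s * cs.simple t) ^ n = 1 →
      ((anRefl M s * anRefl M t) ^ n) ((1:ℝ) • Finsupp.single s 1 + (0:ℝ) • Finsupp.single t 1) =
      (1:ℝ) • Finsupp.single s 1 + (0:ℝ) • Finsupp.single t 1 := by
    intro n h
    have := congrArg φ h
    rw [map_pow, map_mul, hφ, hφ, map_one] at this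
    rw [this]; rfl
  constructor
  · intro h
    have h1 := key 2 h
    simp only [pow_succ, pow_zero, one_mul, LinearEquiv.mul_apply, hs, ht] at h1
    have hs' := DFunLike.congr_fun h1 s
    have ht' := DFunLike.congr_fun h1 t
    simp [hst, Ne.symm hst] at hs' ht'
    have h0 : c * (c ^ 2 - 2) = 0 := by linear_combination (-1 : ℝ) * ht'
    have h2 : c ^ 2 = 2 := by linarith [(mul_eq_zero.1 h0).resolve_left hne]
    have : (c ^ 2 - 1) ^ 2 - c ^ 2 = 1 := by linear_combination hs'
    rw [h2] at this
    norm_num at this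
  · intro h
    have h1 := key 3 h
    simp only [pow_succ, pow_zero, one_mul, LinearEquiv.mul_apply, hs, ht] at h1
    have hs' := DFunLike.congr_fun h1 s
    have ht' := DFunLike.congr_fun h1 t
    simp [hst, Ne.symm hst] at hs' ht'
    have h0 : c * ((c ^ 2 - 1) * (c ^ 2 - 3)) = 0 := by linear_combination (-1 : ℝ) * ht'
    have h2 : c ^ 2 = 3 := by
      rcases mul_eq_zero.1 ((mul_eq_zero.1 h0).resolve_left hne) with h | h <;> linarith
    have : (c ^ 2 - 1) * (c ^ 2 * c ^ 2 - 3 * c ^ 2 + 1) - c ^ 2 * (c ^ 2 - 2) = 1 := by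
      linear_combination hs'
    rw [h2] at this
    norm_num at this

end Geometric

lemma an_alt_prod {G : Type*} [Group G] {a b : G} (haa : a * a = 1) (hbb : b * b = 1) (m : ℕ) :
    (List.ofFn fun j : Fin m => if (j : ℕ) % 2 = 0 then a else b).prod *
      ((List.ofFn fun j : Fin m => if (j : ℕ) % 2 = 0 then b else a).prod)⁻¹ = (a * b) ^ m := by
  induction m generalizing a b with
  | zero => simp
  | succ m ih =>
    have key : ∀ x y : G, (List.ofFn fun j : Fin (m + 1) => if (j : ℕ) % 2 = 0 then x else y).prod =
        x * (List.ofFn fun j : Fin m => if (j : ℕ) % 2 = 0 then y else x).prod := by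
      intro x y
      rw [List.ofFn_succ, List.prod_cons]
      congr 3
      funext j
      have : ((j.succ : Fin (m + 1)) : ℕ) = j + 1 := rfl
      rw [this]
      rcases Nat.mod_two_eq_zero_or_one j with h | h
      · rw [if_neg (by omega), if_pos h]
      · rw [if_pos (by omega), if_neg (by omega)]
    rw [key, key, mul_inv_rev]
    have h := ih hbb haa
    rw [mul_assoc, ← mul_assoc _ _ b⁻¹, h, inv_eq_of_mul_eq_one_left hbb]
    have : ∀ n : ℕ, a * ((b * a) ^ n * b) = (a * b) ^ (n + 1) := by
      intro n
      induction n with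
      | zero => simp
      | succ n ih =>
        rw [pow_succ (a * b), ← ih, pow_succ]
        simp only [mul_assoc]
    exact this m

lemma an_relators {S : Type*} (M : CoxeterMatrix S) :
    ∀ r ∈ artinRelators M, FreeGroup.lift M.toCoxeterSystem.simple r = 1 := by
  rintro r ⟨s, t, hst, h2, rfl⟩
  have key : ∀ s t m, FreeGroup.lift M.toCoxeterSystem.simple (artinAltWord s t m) =
      (List.ofFn fun j : Fin m => if (j : ℕ) % 2 = 0 then M.toCoxeterSystem.simple s
        else M.toCoxeterSystem.simple t).prod := by
    intro s t m
    rw [artinAltWord, map_list_prod, List.map_ofFn]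
    congr 2
    funext j
    simp only [Function.comp_apply, FreeGroup.lift_apply_of]
    split_ifs <;> rfl
  rw [map_mul, map_inv, key, key, an_alt_prod (M.toCoxeterSystem.simple_mul_simple_self s)
    (M.toCoxeterSystem.simple_mul_simple_self t), M.toCoxeterSystem.simple_mul_simple_pow]

lemma an_word {S : Type*} (M : CoxeterMatrix S)
    {k : ℕ} (i : Fin k → S) (ε : Fin k → ℤ) (hε : ∀ j, ε j = 1 ∨ ε j = -1)
    (hprod : (List.ofFn fun j => artinGen M (i j) ^ ε j).prod = 1) :
    M.toCoxeterSystem.wordProd (List.ofFn i) = 1 := by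
  have h := congrArg (PresentedGroup.toGroup (an_relators M)) hprod
  rw [map_one, map_list_prod, List.map_ofFn] at h
  rw [CoxeterSystem.wordProd, List.map_ofFn, ← h]
  congr 2
  funext j
  simp only [Function.comp_apply, map_zpow, artinGen, PresentedGroup.toGroup.of]
  rcases hε j with h | h
  · rw [h, zpow_one]
  · rw [h, zpow_neg_one]
    exact (M.toCoxeterSystem.inv_simple _).symm

open Classical in
lemma an_count {S : Type*} {k : ℕ} (i : Fin k → S)
    (hpair : ∀ j, Nat.card {l : Fin k // i l = i j} = 2) (x : S) :
    (List.ofFn i).count x ≤ 2 := by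
  by_cases hx : ∃ j, i j = x
  · obtain ⟨j, rfl⟩ := hx
    rw [← hpair j, Nat.card_eq_fintype_card, Fintype.card_subtype]
    rw [List.ofFn_eq_map, List.count, List.countP_map, List.countP_eq_length_filter]
    rw [← List.toFinset_card_of_nodup ((List.nodup_finRange k).filter _)]
    apply Finset.card_le_card
    intro l
    simp
  · rw [List.count_eq_zero_of_not_mem]
    · omega
    · rw [List.mem_ofFn]; exact hx

open Classical in
lemma an_filter_length {S : Type*} {a b : S} (l : List S) :
    (l.filter (fun x => x = a ∨ x = b)).length ≤ l.count a + l.count b := by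
  induction l with
  | nil => simp
  | cons x l ih =>
    rw [List.filter_cons, List.count_cons, List.count_cons]
    by_cases h1 : x = a
    · simp [h1] at ih ⊢; omega
    · by_cases h2 : x = b
      · simp [h2] at ih ⊢; omega
      · simp [h1, h2] at ih ⊢; omega

/-- Let `M` be a Coxeter matrix of extra-large type (`M s t = 0` or `M s t ≥ 4` for `s ≠ t`,
`0` encoding `∞`) on a countable type `S`, with Artin group `A` and generators `a`.  If the
word `(a_{i₁}^{ε₁}, …, a_{i_k}^{ε_k})` defines a pair partition `V` (every fiber of `j ↦ i j`
has exactly two elements) and `a_{i₁}^{ε₁} ⋯ a_{i_k}^{ε_k} = 1` in `A`, then `V` is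
non-crossing. -/
theorem artin_noncrossing_of_word_eq_one {S : Type*} [Countable S]
    (M : CoxeterMatrix S) (hM : ∀ s t : S, s ≠ t → M s t = 0 ∨ 4 ≤ M s t)
    {k : ℕ} (i : Fin k → S) (ε : Fin k → ℤ) (hε : ∀ j, ε j = 1 ∨ ε j = -1)
    (hpair : ∀ j, Nat.card {l : Fin k // i l = i j} = 2)
    (hprod : (List.ofFn fun j => artinGen M (i j) ^ ε j).prod = 1) :
    ¬ ∃ a c b d : Fin k, a < c ∧ c < b ∧ b < d ∧
        i a = i b ∧ i c = i d ∧ i a ≠ i c := by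
  classical
  rintro ⟨a, c, b, d, hac, hcb, hbd, hab, hcd, hne⟩
  have hcount := an_count i hpair
  refine an_main (an_large M hM) hne _ (List.ofFn i) le_rfl ?_ (an_word M i ε hε hprod) ?_
  · intro x
    convert hcount x
  · left
    have h1 : [a, c, b, d].Sublist (List.finRange k) := by
      have hp : [a, c, b, d].Pairwise (· < ·) := by
        simp only [List.pairwise_cons, List.mem_cons, List.not_mem_nil, or_false, forall_eq_or_imp,
          forall_eq, List.Pairwise.nil, and_true, IsEmpty.forall_iff, implies_true]
        omega
      refine List.sublist_of_subperm_of_pairwise (r := (· < ·)) ?_ hp (List.pairwise_lt_finRange k)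
      exact List.Nodup.subperm (hp.imp (fun h => ne_of_lt h)) (fun x _ => List.mem_finRange x)
    have h2 := (h1.map i).filter (fun x => decide (x = i a ∨ x = i c))
    rw [← List.ofFn_eq_map] at h2
    simp only [List.map_cons, List.map_nil, ← hab, ← hcd] at h2
    simp only [List.filter_cons, List.filter_nil, true_or, or_true, decide_true, if_true] at h2
    refine (List.Sublist.eq_of_length_le h2 ?_).symm
    have := an_filter_length (a := i a) (b := i c) (List.ofFn i)
    have e1 := hcount (i a)
    have e2 := hcount (i c)
    simp only [List.length_cons, List.length_nil]
    omega
end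

section
/- Let M be a Coxeter matrix on a countable type S with M s t = 0 or M s t ≥ 4 for all s ≠ t (extra-large type, 0 encoding ∞), let A be the associated Artin group with generators a : S → A, and let w = (a_{i_1}^{ε_1}, …, a_{i_k}^{ε_k}) be a word in the generators and their inverses (ε_j ∈ {+1, −1}) whose associated partition of {1, …, k} is a pair partition. (i) If there exist j ≠ l with i_j = i_l and ε_j = ε_l, then a_{i_1}^{ε_1} · … · a_{i_k}^{ε_k} ≠ 1 in A. (ii) Conversely, if the pair partition is non-crossing and ε_j = −ε_l whenever j ≠ l and i_j = i_l, then a_{i_1}^{ε_1} · … · a_{i_k}^{ε_k} = 1 in A. -/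
open Filter Topology

/-- Numbers-game state. -/
def ngState {S : Type*} (a : S → S → ℝ) (t : S) : List S → S → ℝ
  | [], y => - a y t
  | x :: L, y => ngState a t L y - ngState a t L x * a y x

theorem ngState_pos {S : Type*} [DecidableEq S] (a : S → S → ℝ) (t : S)
    (h2 : ∀ s, a s s = 2) (hsymm : ∀ s t, a s t = a t s)
    (hneg : ∀ s t, s ≠ t → a s t < 0) (hsq : ∀ s t, s ≠ t → 2 ≤ a s t * a s t) :
    ∀ (n : ℕ) (L : List S), L.length = n → t ∉ L → L.IsChain (· ≠ ·) →
      (∀ x, L.count x ≤ 2) →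
      (∀ y, y ≠ t → (y ∉ L → 0 < ngState a t L y) ∧
        (L.count y = 1 → L.head? ≠ some y → 0 < ngState a t L y)) ∧
      (L ≠ [] → 0 ≤ ngState a t L t) := by
  intro n
  induction n using Nat.strong_induction_on with
  | _ n ih =>
  intro L hn ht hch hc
  match L, hn, ht, hch, hc with
  | [], hn, ht, hch, hc =>
    refine ⟨fun y hy => ⟨fun _ => ?_, by simp⟩, by simp⟩
    have := hneg y t hy
    simp [ngState]; linarith
  | z :: L', hn, ht, hch, hc =>
    have ht' : t ∉ L' := fun h => ht (List.mem_cons_of_mem _ h)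
    have hzt : z ≠ t := by rintro rfl; simp at ht
    have hch' : L'.IsChain (· ≠ ·) := hch.tail
    have hc' : ∀ x, L'.count x ≤ 2 := fun x =>
      (List.count_le_count_cons).trans (hc x)
    obtain ⟨I1, I2⟩ := ih L'.length (by simp at hn; omega) L' rfl ht' hch' hc'
    have hhead : L'.head? ≠ some z := by
      cases L' with
      | nil => simp
      | cons x L'' => simp at hch ⊢; exact fun h => hch.1 h.symm
    have hzc : L'.count z ≤ 1 := by
      have := hc z; simp at this; omega
    -- the fired value is positive
    have hz : 0 < ngState a t L' z := by
      by_cases hzm : z ∈ L'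
      · refine (I1 z hzt).2 ?_ hhead
        have := List.count_pos_iff.2 hzm; omega
      · exact (I1 z hzt).1 hzm
    refine ⟨fun y hy => ⟨fun hyL => ?_, fun hy1 hyh => ?_⟩, fun _ => ?_⟩
    · simp only [List.mem_cons, not_or] at hyL
      have h1 := (I1 y hy).1 hyL.2
      have := hneg y z hyL.1
      simp only [ngState]; nlinarith
    · have hyz : y ≠ z := by rintro rfl; simp at hyh
      have hay := hneg y z hyz
      have hy1' : L'.count y = 1 := by
        rw [List.count_cons_of_ne hyz.symm] at hy1; exact hy1
      by_cases hyh' : L'.head? = some y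
      · match L', hyh' with
        | x :: L'', hyh' =>
        simp only [List.head?_cons, Option.some.injEq] at hyh'
        subst hyh'
        have hxL : x ∉ L'' := by
          intro h; have := List.count_pos_iff.2 h; simp at hy1'; omega
        have ht'' : t ∉ L'' := fun h => ht' (List.mem_cons_of_mem _ h)
        obtain ⟨J1, J2⟩ := ih L''.length (by simp at hn; omega) L'' rfl ht'' hch'.tail
          (fun w => (List.count_le_count_cons).trans (hc' w))
        have hD := (J1 x hy).1 hxL
        have hsq' := hsq x z hyz
        have hs := hsymm z x
        simp only [ngState, h2, hs]
        have hzc' : L''.count z ≤ 1 := (List.count_le_count_cons).trans hzc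
        by_cases hpos : 0 < ngState a t L'' z
        · nlinarith [mul_pos hpos (neg_pos.2 hay), mul_le_mul_of_nonneg_right hsq' hD.le]
        · have hzm : z ∈ L'' := by
            by_contra h; exact hpos ((J1 z hzt).1 h)
          have hzh : L''.head? = some z := by
            by_contra h
            exact hpos ((J1 z hzt).2 (by have := List.count_pos_iff.2 hzm; omega) h)
          match L'', hzh with
          | z' :: L3, hzh =>
          simp only [List.head?_cons, Option.some.injEq] at hzh
          subst hzh
          obtain ⟨K1, K2⟩ := ih L3.length (by simp at hn; omega) L3 rfl
            (fun h => ht'' (List.mem_cons_of_mem _ h)) hch'.tail.tail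
            (fun w => (List.count_le_count_cons).trans ((List.count_le_count_cons).trans (hc' w)))
          have hx3 : x ∉ L3 := fun h => hxL (List.mem_cons_of_mem _ h)
          have hE := (K1 x hy).1 hx3
          simp only [ngState, h2] at hD ⊢
          nlinarith [mul_le_mul_of_nonneg_right hsq' hD.le]
      · have := (I1 y hy).2 hy1' hyh'
        simp only [ngState]; nlinarith
    · have hat := hneg t z hzt.symm
      by_cases hL : L' = []
      · subst hL
        have := hsq t z hzt.symm
        simp only [ngState, h2, hsymm z t]; nlinarith
      · have := I2 hL
        simp only [ngState]; nlinarith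

theorem ngState_dichotomy {S : Type*} [DecidableEq S] (a : S → S → ℝ) (t : S)
    (h2 : ∀ s, a s s = 2) (hsymm : ∀ s t, a s t = a t s)
    (hneg : ∀ s t, s ≠ t → a s t < 0) (hsq : ∀ s t, s ≠ t → 2 ≤ a s t * a s t) :
    ∀ (n : ℕ) (L : List S), L.length = n → t ∉ L → (∀ x, L.count x ≤ 2) →
      ngState a t L t = -2 ∨ 0 ≤ ngState a t L t := by
  intro n
  induction n using Nat.strong_induction_on with
  | _ n ih =>
  intro L hn ht hc
  by_cases hch : L.IsChain (· ≠ ·)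
  · by_cases hL : L = []
    · subst hL; left; simp [ngState, h2]
    · right; exact (ngState_pos a t h2 hsymm hneg hsq n L hn ht hch hc).2 hL
  · have key : ∀ L : List S, ¬ L.IsChain (· ≠ ·) → ∃ P x Q, L = P ++ x :: x :: Q := by
      intro L
      induction L with
      | nil => simp
      | cons x L ihL =>
        intro h
        by_cases h' : L.IsChain (· ≠ ·)
        · cases L with
          | nil => simp at h
          | cons y L =>
            rw [List.isChain_cons_cons] at h
            have : x = y := by by_contra hne; exact h ⟨hne, h'⟩
            subst this
            exact ⟨[], x, L, rfl⟩
        · obtain ⟨P, z, Q, rfl⟩ := ihL h'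
          exact ⟨x :: P, z, Q, rfl⟩
    obtain ⟨P, x, Q, rfl⟩ := key L hch
    have heq : ∀ P : List S, ngState a t (P ++ x :: x :: Q) = ngState a t (P ++ Q) := by
      intro P
      induction P with
      | nil => funext y; simp only [List.nil_append, ngState, h2]; ring
      | cons p P ihP => funext y; simp only [List.cons_append, ngState, ihP]
    rw [heq]
    refine ih (P ++ Q).length (by simp at hn ⊢; omega) (P ++ Q) rfl ?_ ?_
    · simp at ht ⊢; tauto
    · intro y
      have := hc y
      refine le_trans (List.Sublist.count_le _ ?_) this
      exact List.Sublist.append_left (by simp) P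

/-- First-rightmost alternating product `⋯ a b a` with `m` factors. -/
def altRev {H : Type*} [Group H] : H → H → ℕ → H
  | _, _, 0 => 1
  | a, b, m + 1 => altRev b a m * a

theorem altRev_inv_mul {H : Type*} [Group H] (m : ℕ) (a b : H) (ha : a * a = 1) (hb : b * b = 1) :
    (altRev b a m)⁻¹ * altRev a b m = (b * a) ^ m := by
  induction m generalizing a b with
  | zero => simp [altRev]
  | succ m ih =>
    have hb' : b⁻¹ = b := inv_eq_of_mul_eq_one_left hb
    simp only [altRev, mul_inv_rev, hb']
    calc b * (altRev a b m)⁻¹ * (altRev b a m * a)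
        = b * ((altRev a b m)⁻¹ * altRev b a m) * a := by group
      _ = b * (a * b) ^ m * a := by rw [ih b a hb ha]
      _ = (b * a) ^ (m + 1) := by
        have h : SemiconjBy b (a * b) (b * a) := by simp [SemiconjBy, mul_assoc]
        rw [(h.pow_right m).eq, pow_succ, mul_assoc]

open Classical in
/-- The permutation `(r, n) ↦ (g r g, n + [r = g])`. -/
noncomputable def signPerm {G : Type*} [Group G] (g : G) (hg : g * g = 1) : Equiv.Perm (G × ℤ) where
  toFun p := (g * p.1 * g, p.2 + if p.1 = g then 1 else 0)
  invFun p := (g * p.1 * g, p.2 - if p.1 = g then 1 else 0)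
  left_inv p := by
    have : g * p.1 * g = g ↔ p.1 = g := by
      rw [mul_eq_right]
      constructor
      · intro h; rw [← mul_left_cancel_iff (a := g), h, hg]
      · rintro h; rw [h, hg]
    ext
    · simp [mul_assoc, hg]; simp [← mul_assoc, hg]
    · simp [this]
  right_inv p := by
    have : g * p.1 * g = g ↔ p.1 = g := by
      rw [mul_eq_right]
      constructor
      · intro h; rw [← mul_left_cancel_iff (a := g), h, hg]
      · rintro h; rw [h, hg]
    ext
    · simp [mul_assoc, hg]; simp [← mul_assoc, hg]
    · simp [this]

open Classical in
theorem signPerm_zpow {G : Type*} [Group G] (g : G) (hg : g * g = 1) (e : ℤ) (he : e = 1 ∨ e = -1)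
    (p : G × ℤ) :
    ((signPerm g hg) ^ e) p = (g * p.1 * g, p.2 + e * if p.1 = g then 1 else 0) := by
  rcases he with rfl | rfl
  · simp [signPerm]
  · rw [zpow_neg_one]
    change (signPerm g hg).symm p = _
    by_cases h : p.1 = g <;> simp [signPerm, sub_eq_add_neg, h]

open Classical in
theorem altRev_signPerm {G : Type*} [Group G] (m : ℕ) (a b : G) (ha : a * a = 1) (hb : b * b = 1)
    (p : G × ℤ) :
    altRev (signPerm a ha) (signPerm b hb) m p =
      (altRev a b m * p.1 * (altRev a b m)⁻¹,
        p.2 + ∑ j ∈ Finset.range m, if p.1 = (a * b) ^ j * a then 1 else 0) := by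
  induction m generalizing a b p with
  | zero => simp [altRev]
  | succ m ih =>
    have ha' : a⁻¹ = a := inv_eq_of_mul_eq_one_left ha
    simp only [altRev, Equiv.Perm.mul_apply]
    rw [ih]
    ext
    · simp [signPerm, mul_assoc, ha']
    · rw [Finset.sum_range_succ']
      simp only [signPerm, Equiv.coe_fn_mk, pow_zero, one_mul]
      have : ∀ j, (a * p.1 * a = (b * a) ^ j * b) ↔ (p.1 = (a * b) ^ (j + 1) * a) := by
        intro j
        have h : SemiconjBy a (b * a) (a * b) := by simp [SemiconjBy, mul_assoc]
        have h' : (a * b) ^ (j + 1) * a = a * ((b * a) ^ j * b) * a := by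
          rw [pow_succ, ← mul_assoc a, (h.pow_right j).eq]; simp [mul_assoc]
        rw [h']
        constructor
        · intro h; rw [← h]; simp [mul_assoc, ha]; simp [← mul_assoc, ha]
        · intro h; rw [h]; simp [mul_assoc, ha]; simp [← mul_assoc, ha]
      simp only [this]
      ring

theorem signPerm_braid {G : Type*} [Group G] (m : ℕ) (a b : G) (ha : a * a = 1) (hb : b * b = 1)
    (hab : (a * b) ^ m = 1) :
    altRev (signPerm a ha) (signPerm b hb) m = altRev (signPerm b hb) (signPerm a ha) m := by
  classical
  have h1 : altRev a b m = altRev b a m := by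
    have := altRev_inv_mul m b a hb ha
    rw [hab, inv_mul_eq_one] at this
    exact this
  ext1 p
  rw [altRev_signPerm, altRev_signPerm, h1]
  congr 2
  rw [← Finset.sum_range_reflect]
  refine Finset.sum_congr rfl fun j hj => ?_
  have hj' := Finset.mem_range.1 hj
  have : (a * b) ^ (m - 1 - j) * a = (b * a) ^ j * b := by
    have ha' : a⁻¹ = a := inv_eq_of_mul_eq_one_left ha
    have hb' : b⁻¹ = b := inv_eq_of_mul_eq_one_left hb
    have hinv : b * a = (a * b)⁻¹ := by rw [mul_inv_rev, ha', hb']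
    have hbb : b = (a * b)⁻¹ * a := by rw [← hinv, mul_assoc, ha, mul_one]
    have : (b * a) ^ j * b = ((a * b) ^ (j + 1))⁻¹ * a := by
      conv_lhs => rw [hinv]
      conv_lhs => rhs; rw [hbb]
      rw [← mul_assoc, ← pow_succ, inv_pow]
    rw [this]
    congr 1
    rw [eq_inv_iff_mul_eq_one, ← pow_add, ← hab]
    congr 1; omega
  rw [this]

theorem signPerm_word {G : Type*} [Group G] {k : ℕ} (g : Fin k → G) (hg : ∀ j, g j * g j = 1)
    (ε : Fin k → ℤ) (hε : ∀ j, ε j = 1 ∨ ε j = -1) (p : G × ℤ) [DecidableEq G] :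
    (List.ofFn fun j => signPerm (g j) (hg j) ^ ε j).prod p =
      ((List.ofFn g).prod * p.1 * (List.ofFn g).prod⁻¹,
        p.2 + ∑ j : Fin k, ε j * if p.1 = ((List.ofFn g).drop (j + 1)).prod⁻¹ * g j *
          ((List.ofFn g).drop (j + 1)).prod then 1 else 0) := by
  induction k with
  | zero => simp
  | succ k ih =>
    rw [List.ofFn_succ, List.prod_cons, Equiv.Perm.mul_apply,
      ih (fun j => g j.succ) (fun j => hg _) (fun j => ε j.succ) (fun j => hε _),
      signPerm_zpow _ _ _ (hε 0), Fin.sum_univ_succ, List.ofFn_succ]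
    have h0 : (g 0)⁻¹ = g 0 := inv_eq_of_mul_eq_one_left (hg 0)
    ext
    · simp [mul_assoc, h0]
    · simp only [Fin.val_zero, zero_add, List.drop_succ_cons, List.drop_zero, Fin.val_succ]
      have : ((List.ofFn fun j => g j.succ).prod * p.1 * (List.ofFn fun j => g j.succ).prod⁻¹ = g 0)
        ↔ p.1 = (List.ofFn fun j => g j.succ).prod⁻¹ * g 0 * (List.ofFn fun j => g j.succ).prod := by
        rw [mul_inv_eq_iff_eq_mul, mul_assoc, eq_inv_mul_iff_mul_eq]
      rw [add_assoc]
      congr 1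
      rw [add_comm]
      congr 1
      congr 1
      by_cases hh : p.1 = (List.ofFn fun j => g j.succ).prod⁻¹ * g 0 *
          (List.ofFn fun j => g j.succ).prod
      · rw [if_pos hh, if_pos (this.2 hh)]
      · rw [if_neg hh, if_neg (fun h => hh (this.1 h))]

theorem lift_artinAltWord {S H : Type*} [Group H] (f : S → H) (s t : S) (m : ℕ) :
    FreeGroup.lift f (artinAltWord s t m) =
      if m % 2 = 0 then altRev (f t) (f s) m else altRev (f s) (f t) m := by
  induction m with
  | zero => simp [artinAltWord, altRev]
  | succ m ih =>
    have : artinAltWord s t (m + 1) = artinAltWord s t m *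
        FreeGroup.of (if m % 2 = 0 then s else t) := by
      unfold artinAltWord
      rw [List.ofFn_succ_last]
      simp
    rw [this, map_mul, ih]
    rcases Nat.mod_two_eq_zero_or_one m with h | h
    · have hsucc : (m + 1) % 2 = 1 := by omega
      simp [h, hsucc, altRev]
    · have hsucc : (m + 1) % 2 = 0 := by omega
      simp [h, hsucc, altRev]

/-- Cartan-type coefficients of the geometric representation. -/
noncomputable def coxCoeff {S : Type*} (M : CoxeterMatrix S) (s t : S) : ℝ :=
  if M s t = 0 then -2 else -2 * Real.cos (Real.pi / M s t)

theorem coxCoeff_self {S : Type*} (M : CoxeterMatrix S) (s : S) : coxCoeff M s s = 2 := by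
  simp [coxCoeff]

theorem coxCoeff_symm {S : Type*} (M : CoxeterMatrix S) (s t : S) :
    coxCoeff M s t = coxCoeff M t s := by
  simp [coxCoeff, M.symmetric s t]

theorem coxCoeff_le {S : Type*} (M : CoxeterMatrix S)
    (hM : ∀ s t : S, s ≠ t → M s t = 0 ∨ 4 ≤ M s t) (s t : S) (h : s ≠ t) :
    coxCoeff M s t ≤ -√2 := by
  unfold coxCoeff
  rcases hM s t h with h0 | h4
  · rw [if_pos h0]
    have : √(2:ℝ) ≤ 2 := by rw [Real.sqrt_le_iff]; norm_num
    linarith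
  · rw [if_neg (by omega)]
    have h4' : (4 : ℝ) ≤ M s t := by exact_mod_cast h4
    have : Real.cos (Real.pi / 4) ≤ Real.cos (Real.pi / M s t) := by
      apply Real.cos_le_cos_of_nonneg_of_le_pi
      · positivity
      · linarith [Real.pi_pos]
      · gcongr
    rw [Real.cos_pi_div_four] at this
    linarith

/-- The coroot functional. -/
noncomputable def coxForm {S : Type*} (M : CoxeterMatrix S) (s : S) : Module.Dual ℝ (S →₀ ℝ) :=
  Finsupp.linearCombination ℝ (coxCoeff M s)

theorem coxForm_single {S : Type*} (M : CoxeterMatrix S) (s t : S) :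
    coxForm M s (Finsupp.single t 1) = coxCoeff M s t := by
  simp [coxForm]

/-- The simple reflections of the geometric representation. -/
noncomputable def coxRefl {S : Type*} (M : CoxeterMatrix S) (s : S) : (S →₀ ℝ) ≃ₗ[ℝ] (S →₀ ℝ) :=
  Module.reflection (x := Finsupp.single s 1) (f := coxForm M s)
    (by rw [coxForm_single, coxCoeff_self])

theorem coxRefl_apply {S : Type*} (M : CoxeterMatrix S) (s : S) (v : S →₀ ℝ) :
    coxRefl M s v = v - coxForm M s v • Finsupp.single s 1 :=
  Module.reflection_apply _ _

theorem coxRefl_sq {S : Type*} (M : CoxeterMatrix S) (s : S) :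
    coxRefl M s * coxRefl M s = 1 := by
  ext1 v
  rw [LinearEquiv.mul_apply, coxRefl_apply M s (coxRefl M s v), coxRefl_apply, map_sub, map_smul,
    coxForm_single, coxCoeff_self]
  change _ = v
  module

theorem reflection_pow_eq_one {V : Type*} [AddCommGroup V] [Module ℝ V] {x y : V}
    {f g : Module.Dual ℝ V} (hf : f x = 2) (hg : g y = 2) (m : ℕ) (h : 3 ≤ m)
    (hfg : f y * g x = (-2 * Real.cos (Real.pi / m)) * (-2 * Real.cos (Real.pi / m))) :
    (Module.reflection hf * Module.reflection hg) ^ m = 1 := by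
  ext1 z
  have hm0 : (m : ℝ) ≠ 0 := by positivity
  set θ : ℝ := 2 * Real.pi / m with hθ
  have hmθ : m * θ = 2 * Real.pi := by rw [hθ]; field_simp
  have hsin : Real.sin θ ≠ 0 := by
    have h3 : (3 : ℝ) ≤ m := by exact_mod_cast h
    apply ne_of_gt
    apply Real.sin_pos_of_pos_of_lt_pi
    · positivity
    · rw [hθ, div_lt_iff₀ (by linarith)]; nlinarith [Real.pi_pos]
  have ht : 2 * Real.cos θ = f y * g x - 2 := by
    rw [hfg, hθ, mul_div_assoc, Real.cos_two_mul]
    ring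
  have key := Module.reflection_mul_reflection_pow_apply hf hg m z (2 * Real.cos θ) ht
  have hS := fun n : ℤ => Polynomial.Chebyshev.S_two_mul_real_cos θ n
  have hz : ∀ n : ℤ, Real.sin ((n + 1) * θ) = 0 →
      (Polynomial.Chebyshev.S ℝ n).eval (2 * Real.cos θ) = 0 := by
    intro n hn
    have := hS n
    rw [hn] at this
    exact (mul_eq_zero.1 this).resolve_right hsin
  refine key.trans ?_
  rcases Nat.even_or_odd' m with ⟨k, hk | hk⟩
  · have e1 : ((m : ℤ) - 2) / 2 = k - 1 := by omega
    have e2 : ((m : ℤ) - 1) / 2 = k - 1 := by omega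
    have : (Polynomial.Chebyshev.S ℝ (k - 1 : ℤ)).eval (2 * Real.cos θ) = 0 := by
      apply hz
      have hkk : (m : ℝ) = 2 * k := by exact_mod_cast hk
      have : ((((k : ℤ) - 1 : ℤ) : ℝ) + 1) * θ = Real.pi := by
        push_cast; rw [hkk] at hmθ; linarith
      rw [this, Real.sin_pi]
    rw [e1, e2, this]
    simp
  · have e1 : ((m : ℤ) - 2) / 2 = k - 1 := by omega
    have e2 : ((m : ℤ) - 1) / 2 = k := by omega
    have e3 : ((m : ℤ) - 3) / 2 = k - 1 := by omega
    have e4 : (m : ℤ) / 2 = k := by omega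
    have : (Polynomial.Chebyshev.S ℝ (k : ℤ)).eval (2 * Real.cos θ) +
        (Polynomial.Chebyshev.S ℝ (k - 1 : ℤ)).eval (2 * Real.cos θ) = 0 := by
      have h1 := hS k
      have h2 := hS (k - 1)
      have hkk : (m : ℝ) = 2 * k + 1 := by exact_mod_cast hk
      have : (((k : ℤ) : ℝ) + 1) * θ = 2 * Real.pi - ((((k : ℤ) - 1 : ℤ) : ℝ) + 1) * θ := by
        push_cast; rw [hkk] at hmθ; linarith
      rw [this, Real.sin_two_pi_sub] at h1
      have h3 : ((Polynomial.Chebyshev.S ℝ (k : ℤ)).eval (2 * Real.cos θ) +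
        (Polynomial.Chebyshev.S ℝ (k - 1 : ℤ)).eval (2 * Real.cos θ)) * Real.sin θ = 0 := by
        rw [add_mul, h1, h2]; ring
      exact (mul_eq_zero.1 h3).resolve_right hsin
    rw [e1, e2, e3, e4, this]
    simp

theorem coxRefl_pow {S : Type*} (M : CoxeterMatrix S) (s t : S) (h : 3 ≤ M s t) :
    (coxRefl M s * coxRefl M t) ^ (M s t) = 1 := by
  unfold coxRefl
  apply reflection_pow_eq_one _ _ _ h
  rw [coxForm_single, coxForm_single, coxCoeff_symm M t s, coxCoeff, if_neg (by omega)]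

theorem coxForm_prod {S : Type*} (M : CoxeterMatrix S) (t : S) (L : List S) (y : S) :
    coxForm M y ((L.map (coxRefl M)).prod (Finsupp.single t 1)) =
      - ngState (coxCoeff M) t L y := by
  induction L generalizing y with
  | nil => simp [ngState, coxForm_single]
  | cons x L ih =>
    rw [List.map_cons, List.prod_cons, LinearEquiv.mul_apply, coxRefl_apply, map_sub, map_smul,
      coxForm_single, ih, ih, ngState]
    simp; ring

theorem coxRefl_coeff_of_notMem {S : Type*} (M : CoxeterMatrix S) (t : S) (L : List S) (h : t ∉ L)
    (v : S →₀ ℝ) : (L.map (coxRefl M)).prod v t = v t := by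
  induction L with
  | nil => simp
  | cons x L ih =>
    simp only [List.mem_cons, not_or] at h
    rw [List.map_cons, List.prod_cons, LinearEquiv.mul_apply, coxRefl_apply]
    simp [ih h.2, Ne.symm h.1]

theorem coxRefl_coeff_ne_zero {S : Type*} [DecidableEq S] (M : CoxeterMatrix S)
    (hM : ∀ s t : S, s ≠ t → M s t = 0 ∨ 4 ≤ M s t) (t : S) (L : List S)
    (ht : L.count t ≤ 1) (hc : ∀ x, L.count x ≤ 2) :
    (L.map (coxRefl M)).prod (Finsupp.single t 1) t ≠ 0 := by
  by_cases h : t ∈ L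
  · obtain ⟨P, Q, rfl⟩ := List.append_of_mem h
    have h1 : t ∉ P ∧ t ∉ Q := by
      simp only [← List.count_eq_zero]
      simp at ht; omega
    rw [List.map_append, List.prod_append, LinearEquiv.mul_apply,
      coxRefl_coeff_of_notMem M t P h1.1, List.map_cons, List.prod_cons, LinearEquiv.mul_apply,
      coxRefl_apply, coxForm_prod]
    have hle := coxCoeff_le M hM
    have hs2 : 0 < √(2:ℝ) := by positivity
    have hs22 : √(2:ℝ) * √2 = 2 := by simp
    have := ngState_dichotomy (coxCoeff M) t (coxCoeff_self M) (coxCoeff_symm M)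
      (fun s t h => by linarith [hle s t h]) (fun s t h => by nlinarith [hle s t h])
      Q.length Q rfl h1.2 (fun x => by have := hc x; simp at this; rw [List.count_cons] at this; omega)
    simp only [Finsupp.coe_sub, Pi.sub_apply, coxRefl_coeff_of_notMem M t Q h1.2,
      Finsupp.single_eq_same, Finsupp.coe_smul, Pi.smul_apply, smul_eq_mul]
    rcases this with h | h
    · rw [h]; norm_num
    · apply ne_of_gt; linarith
  · rw [coxRefl_coeff_of_notMem M t L h]; simp

theorem coxRefl_conj_ne {S : Type*} [DecidableEq S] (M : CoxeterMatrix S)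
    (hM : ∀ s t : S, s ≠ t → M s t = 0 ∨ 4 ≤ M s t) (s t : S) (hst : s ≠ t) (L : List S)
    (ht : L.count t ≤ 1) (hc : ∀ x, L.count x ≤ 2) :
    coxRefl M s * (L.map (coxRefl M)).prod ≠ (L.map (coxRefl M)).prod * coxRefl M t := by
  intro h
  apply coxRefl_coeff_ne_zero M hM t L ht hc
  set u := (L.map (coxRefl M)).prod
  have h1 : coxRefl M s (u (Finsupp.single t 1)) = u (coxRefl M t (Finsupp.single t 1)) := by
    rw [← LinearEquiv.mul_apply, h, LinearEquiv.mul_apply]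
  have h2 : coxRefl M t (Finsupp.single t 1) = - Finsupp.single t 1 :=
    Module.reflection_apply_self _
  rw [h2, map_neg, coxRefl_apply] at h1
  have h3 := DFunLike.congr_fun h1 t
  simp [hst] at h3
  linarith

/-- The action of the Artin group on `GL(V) × ℤ`. -/
noncomputable def artinHom {S : Type*} (M : CoxeterMatrix S)
    (hM : ∀ s t : S, s ≠ t → M s t = 0 ∨ 4 ≤ M s t) :
    ArtinGroup M →* Equiv.Perm (((S →₀ ℝ) ≃ₗ[ℝ] (S →₀ ℝ)) × ℤ) :=
  PresentedGroup.toGroup (f := fun s => signPerm (coxRefl M s) (coxRefl_sq M s)) (by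
    rintro r ⟨s, t, hst, h2, rfl⟩
    have h3 : 3 ≤ M s t := by rcases hM s t hst with h | h <;> omega
    have hb := signPerm_braid (M s t) _ _ (coxRefl_sq M s) (coxRefl_sq M t) (coxRefl_pow M s t h3)
    rw [map_mul, map_inv, mul_inv_eq_one, lift_artinAltWord, lift_artinAltWord]
    split_ifs
    · exact hb.symm
    · exact hb)

theorem artinHom_gen {S : Type*} (M : CoxeterMatrix S)
    (hM : ∀ s t : S, s ≠ t → M s t = 0 ∨ 4 ≤ M s t) (s : S) :
    artinHom M hM (artinGen M s) = signPerm (coxRefl M s) (coxRefl_sq M s) :=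
  PresentedGroup.toGroup.of _

theorem count_ofFn_le {S : Type*} [DecidableEq S] {k : ℕ} (i : Fin k → S) (x : S) :
    (List.ofFn i).count x = Nat.card {l : Fin k // i l = x} := by
  rw [Nat.card_eq_fintype_card, Fintype.card_subtype, List.count_eq_countP, List.ofFn_eq_map,
    List.countP_map, List.countP_eq_length_filter]
  rw [← List.toFinset_card_of_nodup ((List.nodup_finRange k).filter _)]
  congr 1
  ext l
  simp

theorem rho_ne {S : Type*} (M : CoxeterMatrix S)
    (hM : ∀ s t : S, s ≠ t → M s t = 0 ∨ 4 ≤ M s t)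
    {k : ℕ} (i : Fin k → S) (hpair : ∀ j, Nat.card {l : Fin k // i l = i j} = 2)
    (j l : Fin k) (hjl : j < l) (hne : i j ≠ i l) :
    ((List.ofFn fun j => coxRefl M (i j)).drop (j + 1)).prod⁻¹ * coxRefl M (i j) *
          ((List.ofFn fun j => coxRefl M (i j)).drop (j + 1)).prod ≠
    ((List.ofFn fun j => coxRefl M (i j)).drop (l + 1)).prod⁻¹ * coxRefl M (i l) *
          ((List.ofFn fun j => coxRefl M (i j)).drop (l + 1)).prod := by
  classical
  intro h
  have hX : (List.ofFn fun j => coxRefl M (i j)) = (List.ofFn i).map (coxRefl M) := by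
    rw [List.map_ofFn]; rfl
  have hcount : ∀ x, (List.ofFn i).count x ≤ 2 := by
    intro x
    by_cases hx : x ∈ List.ofFn i
    · obtain ⟨j, rfl⟩ := (List.mem_ofFn' _ _).1 hx
      rw [count_ofFn_le, hpair]
    · rw [List.count_eq_zero_of_not_mem hx]; omega
  have hsplit : (List.ofFn i).drop (j + 1) =
      ((List.ofFn i).drop (j + 1)).take (l - j - 1) ++ i l :: (List.ofFn i).drop (l + 1) := by
    have h1 := (List.take_append_drop (l - j - 1) ((List.ofFn i).drop (j + 1))).symm
    rw [List.drop_drop] at h1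
    have hlt : (j : ℕ) < l := hjl
    rw [show (j : ℕ) + 1 + (l - j - 1) = l by omega,
      List.drop_eq_getElem_cons (i := (l : ℕ)) (by simp)] at h1
    simpa using h1
  set u := ((List.ofFn i).drop (j + 1)).take (l - j - 1)
  have hsub : (u ++ i l :: (List.ofFn i).drop (l + 1)).Sublist (List.ofFn i) := by
    rw [← hsplit]; exact List.drop_sublist _ _
  rw [hX, ← List.map_drop, ← List.map_drop, hsplit, List.map_append, List.prod_append,
    List.map_cons, List.prod_cons] at h
  refine coxRefl_conj_ne M hM (i j) (i l) hne u ?_ ?_ ?_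
  · have := (hsub.count_le (i l)).trans (hcount _)
    simp at this; omega
  · intro x
    have := (hsub.count_le x).trans (hcount _)
    rw [List.count_append] at this; omega
  · set U := (u.map (coxRefl M)).prod
    set Q := (((List.ofFn i).drop (l + 1)).map (coxRefl M)).prod
    set t := coxRefl M (i l) with ht
    set s := coxRefl M (i j)
    have htt : t⁻¹ = t := inv_eq_of_mul_eq_one_left (coxRefl_sq M _)
    have h2 : (t⁻¹ * (U⁻¹ * s * U) * t) = t := by
      have : Q⁻¹ * (t⁻¹ * (U⁻¹ * s * U) * t) * Q = Q⁻¹ * t * Q := by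
        rw [← h]; group
      exact mul_left_cancel (mul_right_cancel this)
    have h3 : U⁻¹ * s * U = t := by
      have : U⁻¹ * s * U = t * (t⁻¹ * (U⁻¹ * s * U) * t) * t⁻¹ := by group
      rw [this, h2]; group
    rw [← h3]; group

theorem artin_part_one {S : Type*}
    (M : CoxeterMatrix S) (hM : ∀ s t : S, s ≠ t → M s t = 0 ∨ 4 ≤ M s t)
    {k : ℕ} (i : Fin k → S) (ε : Fin k → ℤ) (hε : ∀ j, ε j = 1 ∨ ε j = -1)
    (hpair : ∀ j, Nat.card {l : Fin k // i l = i j} = 2)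
    (j l : Fin k) (hjl : j ≠ l) (hi : i j = i l) (he : ε j = ε l) :
    (List.ofFn fun j => artinGen M (i j) ^ ε j).prod ≠ 1 := by
  classical
  intro h
  have h1 := congrArg (artinHom M hM) h
  rw [map_list_prod, List.map_ofFn, map_one] at h1
  have h2 : (⇑(artinHom M hM) ∘ fun j => artinGen M (i j) ^ ε j) =
      fun j => signPerm (coxRefl M (i j)) (coxRefl_sq M (i j)) ^ ε j := by
    funext j
    simp only [Function.comp, map_zpow, artinHom_gen]
  rw [h2] at h1
  set ρ : Fin k → ((S →₀ ℝ) ≃ₗ[ℝ] (S →₀ ℝ)) := fun j =>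
    ((List.ofFn fun j => coxRefl M (i j)).drop (j + 1)).prod⁻¹ * coxRefl M (i j) *
          ((List.ofFn fun j => coxRefl M (i j)).drop (j + 1)).prod with hρ
  have h3 := congrArg Prod.snd (DFunLike.congr_fun h1 (ρ j, 0))
  rw [signPerm_word (fun j => coxRefl M (i j)) (fun j => coxRefl_sq M (i j)) ε hε] at h3
  simp only [Equiv.Perm.coe_one, id, zero_add] at h3
  have hinj : ∀ p q, ρ p = ρ q → i p = i q := by
    intro p q hpq
    by_contra hne
    rcases lt_trichotomy p q with hlt | rfl | hlt
    · exact rho_ne M hM i hpair p q hlt hne hpq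
    · exact hne rfl
    · exact rho_ne M hM i hpair q p hlt (Ne.symm hne) hpq.symm
  have hpos : 0 < ∑ p : Fin k, ε j * (ε p * if ρ j = ρ p then 1 else 0) := by
    have hnn : ∀ p ∈ Finset.univ, 0 ≤ ε j * (ε p * if ρ j = ρ p then 1 else 0) := by
      intro p _
      by_cases hp : ρ j = ρ p
      · have hip := hinj _ _ hp
        have hpe : ε p = ε j := by
          by_cases hpj : p = j
          · rw [hpj]
          by_cases hpl : p = l
          · rw [hpl, he]
          exfalso
          have hc := hpair j
          rw [Nat.card_eq_fintype_card, Fintype.card_subtype] at hc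
          have : ({j, l, p} : Finset (Fin k)) ⊆ Finset.univ.filter fun q => i q = i j := by
            intro q hq
            simp only [Finset.mem_insert, Finset.mem_singleton] at hq
            rcases hq with rfl | rfl | rfl <;> simp [hi, hip]
            rw [← hip, hi]
          have := Finset.card_le_card this
          rw [hc, Finset.card_eq_three.2 ⟨j, l, p, hjl, Ne.symm hpj, Ne.symm hpl, rfl⟩] at this
          omega
        rw [if_pos hp, hpe]
        rcases hε j with h | h <;> rw [h] <;> norm_num
      · simp [hp]
    refine Finset.sum_pos' hnn ⟨j, Finset.mem_univ _, ?_⟩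
    rcases hε j with h | h <;> rw [h] <;> norm_num
  rw [← Finset.mul_sum] at hpos
  have h4 : ∑ p : Fin k, (ε p * if ρ j = ρ p then 1 else 0) = 0 := h3
  rw [h4] at hpos
  simp at hpos

theorem noncrossing_prod {S G : Type*} [DecidableEq S] [Group G] (f : S → G) :
    ∀ (n : ℕ) (L : List (S × ℤ)), L.length = n →
      (∀ x ∈ L.map Prod.fst, (L.map Prod.fst).count x = 2) →
      (∀ x y, x ≠ y → ¬ [x, y, x, y].Sublist (L.map Prod.fst)) →
      (∀ x e e', [(x, e), (x, e')].Sublist L → e = -e') →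
      (L.map fun p => f p.1 ^ p.2).prod = 1 := by
  intro n
  induction n using Nat.strong_induction_on with
  | _ n ih =>
  intro L hn hc hx hs
  match L, hn, hc, hx, hs with
  | [], _, _, _, _ => simp
  | (a, e) :: L, hn, hc, hx, hs =>
    have ha : a ∈ L.map Prod.fst := by
      have := hc a (by simp)
      rw [List.map_cons, List.count_cons_self] at this
      exact List.count_pos_iff.1 (by omega)
    obtain ⟨⟨a', e'⟩, hmem, rfl⟩ := List.mem_map.1 ha
    obtain ⟨P, Q, rfl⟩ := List.append_of_mem hmem
    simp only at hc hx hs hn ⊢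
    have hee : e = -e' := hs a' e e' (by simp)
    have haP : a' ∉ P.map Prod.fst ∧ a' ∉ Q.map Prod.fst := by
      have := hc a' (by simp)
      simp only [← List.count_eq_zero]
      simp at this; omega
    have hdisj : ∀ x, x ∈ P.map Prod.fst → x ∈ Q.map Prod.fst → False := by
      intro x hxP hxQ
      refine hx a' x (fun h => haP.1 (h ▸ hxP)) ?_
      simp only [List.map_cons, List.map_append]
      refine List.Sublist.cons_cons _ ?_
      exact List.Sublist.append (l₁ := [x]) (List.singleton_sublist.2 hxP)
        (List.Sublist.cons_cons _ (List.singleton_sublist.2 hxQ))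
    have subP : P.Sublist ((a', e) :: (P ++ (a', e') :: Q)) :=
      (List.sublist_append_left P _).trans (List.sublist_cons_self _ _)
    have subQ : Q.Sublist ((a', e) :: (P ++ (a', e') :: Q)) :=
      ((List.sublist_cons_self _ _).trans (List.sublist_append_right P _)).trans
        (List.sublist_cons_self _ _)
    have hP := ih P.length (by simp at hn; omega) P rfl (by
        intro x hxP
        have := hc x (subP.map _ |>.subset hxP)
        have hxa : a' ≠ x := fun h => haP.1 (h ▸ hxP)
        simp only [List.map_cons, List.map_append, List.count_append] at this
        rw [List.count_cons_of_ne hxa, List.count_append, List.count_cons_of_ne hxa,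
          List.count_eq_zero_of_not_mem (fun h => hdisj x hxP h)] at this
        simpa using this)
      (fun x y hxy h => hx x y hxy (h.trans (subP.map _)))
      (fun x e e' h => hs x e e' (h.trans subP))
    have hQ := ih Q.length (by simp at hn; omega) Q rfl (by
        intro x hxQ
        have := hc x (subQ.map _ |>.subset hxQ)
        have hxa : a' ≠ x := fun h => haP.2 (h ▸ hxQ)
        simp only [List.map_cons, List.map_append, List.count_append] at this
        rw [List.count_cons_of_ne hxa, List.count_append, List.count_cons_of_ne hxa,
          List.count_eq_zero_of_not_mem (fun h => hdisj x h hxQ)] at this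
        simpa using this)
      (fun x y hxy h => hx x y hxy (h.trans (subQ.map _)))
      (fun x e e' h => hs x e e' (h.trans subQ))
    simp [hP, hQ, hee]

theorem artin_part_two {S G : Type*} [Group G] (f : S → G)
    {k : ℕ} (i : Fin k → S) (ε : Fin k → ℤ)
    (hpair : ∀ j, Nat.card {l : Fin k // i l = i j} = 2)
    (hnc : ¬ ∃ a c b d : Fin k, a < c ∧ c < b ∧ b < d ∧
          i a = i b ∧ i c = i d ∧ i a ≠ i c)
    (hs : ∀ j l : Fin k, j ≠ l → i j = i l → ε j = -ε l) :
    (List.ofFn fun j => f (i j) ^ ε j).prod = 1 := by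
  classical
  have hfst : (List.ofFn fun j => (i j, ε j)).map Prod.fst = List.ofFn i := by
    rw [List.map_ofFn]; rfl
  have := noncrossing_prod f k (List.ofFn fun j => (i j, ε j)) (by simp) ?_ ?_ ?_
  · rw [List.map_ofFn] at this
    exact this
  · rw [hfst]
    intro x hx
    obtain ⟨j, rfl⟩ := (List.mem_ofFn' _ _).1 hx
    rw [count_ofFn_le, hpair]
  · rw [hfst]
    intro x y hxy h
    obtain ⟨g, hg⟩ := List.sublist_iff_exists_fin_orderEmbedding_get_eq.1 h
    have hk : (List.ofFn i).length = k := by simp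
    apply hnc
    refine ⟨(g 0).cast hk, (g 1).cast hk, (g 2).cast hk, (g 3).cast hk, ?_, ?_, ?_, ?_, ?_, ?_⟩
    · exact g.strictMono (show (0 : Fin 4) < 1 by decide)
    · exact g.strictMono (show (1 : Fin 4) < 2 by decide)
    · exact g.strictMono (show (2 : Fin 4) < 3 by decide)
    all_goals
      have g0 := hg (0 : Fin 4)
      have g1 := hg (1 : Fin 4)
      have g2 := hg (2 : Fin 4)
      have g3 := hg (3 : Fin 4)
      rw [List.get_ofFn] at g0 g1 g2 g3
    · exact g0.symm.trans g2
    · exact g1.symm.trans g3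
    · intro h
      exact hxy (g0.trans (h.trans g1.symm))
  · intro x e e' h
    obtain ⟨g, hg⟩ := List.sublist_iff_exists_fin_orderEmbedding_get_eq.1 h
    have hk : (List.ofFn fun j => (i j, ε j)).length = k := by simp
    have g0 := hg (0 : Fin 2)
    have g1 := hg (1 : Fin 2)
    rw [List.get_ofFn] at g0 g1
    have hlt : (g 0).cast hk < (g 1).cast hk := g.strictMono (show (0 : Fin 2) < 1 by decide)
    have := hs _ _ hlt.ne ((congrArg Prod.fst g0).symm.trans (congrArg Prod.fst g1))
    exact (congrArg Prod.snd g0).trans (this.trans (congrArg Neg.neg (congrArg Prod.snd g1).symm))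

/-- Let `M` be a Coxeter matrix of extra-large type (`M s t = 0` or `M s t ≥ 4` for `s ≠ t`,
`0` encoding `∞`) on a countable type `S`, with Artin group `A` and generators `a`, and let
`(a_{i₁}^{ε₁}, …, a_{i_k}^{ε_k})` be a word whose associated partition is a pair partition.
(i) If some two positions `j ≠ l` carry the same letter `i j = i l` with equal signs
`ε j = ε l`, then `a_{i₁}^{ε₁} ⋯ a_{i_k}^{ε_k} ≠ 1` in `A`.
(ii) Conversely, if the pair partition is non-crossing and the two occurrences of each letter
carry opposite signs, then `a_{i₁}^{ε₁} ⋯ a_{i_k}^{ε_k} = 1` in `A`. -/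
theorem artin_word_eq_one_conditions {S : Type*} [Countable S]
    (M : CoxeterMatrix S) (hM : ∀ s t : S, s ≠ t → M s t = 0 ∨ 4 ≤ M s t)
    {k : ℕ} (i : Fin k → S) (ε : Fin k → ℤ) (hε : ∀ j, ε j = 1 ∨ ε j = -1)
    (hpair : ∀ j, Nat.card {l : Fin k // i l = i j} = 2) :
    ((∃ j l : Fin k, j ≠ l ∧ i j = i l ∧ ε j = ε l) →
        (List.ofFn fun j => artinGen M (i j) ^ ε j).prod ≠ 1) ∧
    (((¬ ∃ a c b d : Fin k, a < c ∧ c < b ∧ b < d ∧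
          i a = i b ∧ i c = i d ∧ i a ≠ i c) ∧
        (∀ j l : Fin k, j ≠ l → i j = i l → ε j = -ε l)) →
        (List.ofFn fun j => artinGen M (i j) ^ ε j).prod = 1) := by
  refine ⟨?_, ?_⟩
  · rintro ⟨j, l, hjl, hi, he⟩
    exact artin_part_one M hM i ε hε hpair j l hjl hi he
  · rintro ⟨hnc, hs⟩
    exact artin_part_two (artinGen M) i ε hpair hnc hs
end
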